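/- arXiv:2202.07788 — 3 statements merged into one kernel-verified Lean document; each statement's English description precedes it below -/
import Mathlib

section
/- (Gow) For q odd, if π is an irreducible complex representation of SL(2, F_q) admitting a nondegenerate invariant symmetric bilinear form, then the central character satisfies ω_π(-I) = 1, i.e., Θ_π(-I) = Θ_π(I). -/
open Matrix

instance : Fact (Even (Fintype.card (Fin 2))) := ⟨by decide⟩

namespace Gow

theorem even_finrank_of_alt {M : Type*} [AddCommGroup M] [Module ℂ M] [FiniteDimensional ℂ M]
    (C : M →ₗ[ℂ] M →ₗ[ℂ] ℂ) (halt : ∀ x y, C x y = - C y x)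
    (hnd : ∀ x, (∀ y, C x y = 0) → x = 0) : Even (Module.finrank ℂ M) := by
  by_contra hodd
  rw [Nat.not_even_iff_odd] at hodd
  let b := Module.finBasis ℂ M
  have hN : LinearMap.BilinForm.Nondegenerate C := by
    refine ⟨hnd, fun y hy => hnd y fun x => ?_⟩
    rw [halt, hy, neg_zero]
  have hdet := (LinearMap.BilinForm.nondegenerate_iff_det_ne_zero (B := C) b).1 hN
  apply hdet
  set A := LinearMap.BilinForm.toMatrix b C with hA
  have hT : Aᵀ = -A := by
    ext i k
    simp only [Matrix.transpose_apply, Matrix.neg_apply, hA, LinearMap.BilinForm.toMatrix_apply]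
    exact halt _ _
  have h1 : A.det = - A.det := by
    conv_lhs => rw [← Matrix.det_transpose, hT, Matrix.det_neg, Fintype.card_fin, hodd.neg_one_pow]
    ring
  exact self_eq_neg.1 h1

theorem four_dvd_finrank {V : Type*} [AddCommGroup V] [Module ℂ V] [FiniteDimensional ℂ V]
    (B : V →ₗ[ℂ] V →ₗ[ℂ] ℂ) (hsymm : ∀ v w, B v w = B w v)
    (hnondeg : ∀ v : V, (∀ w : V, B v w = 0) → v = 0)
    (W J : Module.End ℂ V) (hW : ∀ v, W (W v) = -v) (hJ : ∀ v, J (J v) = -v)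
    (hWJ : ∀ v, W (J v) = - J (W v))
    (hBW : ∀ v w, B (W v) (W w) = B v w) (hBJ : ∀ v w, B (J v) (J w) = B v w) :
    4 ∣ Module.finrank ℂ V := by
  let X : Submodule ℂ V := Module.End.eigenspace W Complex.I
  let Y : Submodule ℂ V := Module.End.eigenspace W (-Complex.I)
  have hX : ∀ v, v ∈ X ↔ W v = Complex.I • v := fun v => Module.End.mem_eigenspace_iff
  have hY : ∀ v, v ∈ Y ↔ W v = (-Complex.I) • v := fun v => Module.End.mem_eigenspace_iff
  have hII : ∀ v : V, Complex.I • Complex.I • v = -v := fun v => by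
    rw [smul_smul, Complex.I_mul_I, neg_one_smul]
  have hJX : ∀ v ∈ X, J v ∈ Y := fun v hv => by
    rw [hX] at hv; rw [hY, hWJ, hv, map_smul, neg_smul]
  have hJY : ∀ v ∈ Y, J v ∈ X := fun v hv => by
    rw [hY] at hv; rw [hX, hWJ, hv, map_smul, neg_smul, neg_neg]
  have hdisj : Disjoint X Y := by
    rw [Submodule.disjoint_def]
    intro v h1 h2
    rw [hX] at h1; rw [hY, h1] at h2
    have h3 : (2 * Complex.I) • v = 0 := by
      rw [mul_smul, two_smul]; nth_rewrite 1 [h2]; module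
    simpa using h3
  have hdecomp : ∀ v, ∃ x ∈ X, ∃ y ∈ Y, x + y = v := fun v => by
    refine ⟨(1/2 : ℂ) • (v - Complex.I • W v), ?_, (1/2 : ℂ) • (v + Complex.I • W v), ?_, ?_⟩
    · rw [hX]; simp only [map_smul, map_sub, hW]
      rw [smul_comm Complex.I, smul_sub Complex.I, hII]; congr 1; module
    · rw [hY]; simp only [map_smul, map_add, hW]
      rw [smul_comm (-Complex.I), neg_smul, smul_add Complex.I, hII]; congr 1; module
    · module
  have hcompl : IsCompl X Y := ⟨hdisj, by
    rw [codisjoint_iff, eq_top_iff]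
    intro v _
    obtain ⟨x, hx, y, hy, rfl⟩ := hdecomp v
    exact Submodule.add_mem_sup hx hy⟩
  have hfr := Submodule.finrank_add_eq_of_isCompl hcompl
  have hle : ∀ (P Q : Submodule ℂ V), (∀ v ∈ P, J v ∈ Q) → Module.finrank ℂ P ≤ Module.finrank ℂ Q := by
    intro P Q h
    apply LinearMap.finrank_le_finrank_of_injective (f := J.restrict h)
    intro a b hab
    have h2 : J a = J b := congrArg Subtype.val hab
    have h3 := congrArg J h2
    rw [hJ, hJ, neg_inj] at h3
    exact Subtype.ext h3
  have heq : Module.finrank ℂ X = Module.finrank ℂ Y := le_antisymm (hle _ _ hJX) (hle _ _ hJY)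
  have hev : Even (Module.finrank ℂ X) := by
    apply even_finrank_of_alt (B.compl₁₂ X.subtype (J ∘ₗ X.subtype))
    · intro x y
      simp only [LinearMap.compl₁₂_apply, Submodule.subtype_apply, LinearMap.comp_apply]
      rw [← hBJ, hJ, map_neg, hsymm]
    · intro x hx
      simp only [LinearMap.compl₁₂_apply, Submodule.subtype_apply, LinearMap.comp_apply] at hx
      apply Subtype.ext
      apply hnondeg
      intro v
      obtain ⟨a, ha, b, hb, rfl⟩ := hdecomp v
      have h1 : B x a = 0 := by
        have := hBW x a
        rw [(hX _).1 x.2, (hX _).1 ha, map_smul, map_smul, LinearMap.smul_apply, smul_smul,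
          Complex.I_mul_I, neg_one_smul, neg_eq_self] at this
        exact this
      have h2 := hx ⟨J b, hJY b hb⟩
      simp only [hJ, map_neg, neg_eq_zero] at h2
      rw [map_add, h1, h2, add_zero]
  obtain ⟨k, hk⟩ := hev
  omega

section group
variable {F : Type*} [Field F]

/-- The upper unipotent element. -/
def n (x : F) : SpecialLinearGroup (Fin 2) F := ⟨!![1, x; 0, 1], by simp [Matrix.det_fin_two]⟩

/-- The diagonal element. -/
def t (a : Fˣ) : SpecialLinearGroup (Fin 2) F :=
  ⟨!![(a : F), 0; 0, (a : F)⁻¹], by simp [Matrix.det_fin_two]⟩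

/-- The Weyl element. -/
def w : SpecialLinearGroup (Fin 2) F := ⟨!![0, 1; -1, 0], by simp [Matrix.det_fin_two]⟩

/-- The anti-involution exchanging the diagonal entries. -/
def tau (g : SpecialLinearGroup (Fin 2) F) : SpecialLinearGroup (Fin 2) F :=
  ⟨!![g 1 1, g 0 1; g 1 0, g 0 0], by
    have := g.det_coe
    rw [Matrix.det_fin_two] at this
    rw [Matrix.det_fin_two_of]; linear_combination this⟩

theorem ext2 {g h : SpecialLinearGroup (Fin 2) F} (h00 : g 0 0 = h 0 0) (h01 : g 0 1 = h 0 1)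
    (h10 : g 1 0 = h 1 0) (h11 : g 1 1 = h 1 1) : g = h := by
  ext i k
  fin_cases i <;> fin_cases k <;> assumption

theorem mul00 (g h : SpecialLinearGroup (Fin 2) F) : (g * h) 0 0 = g 0 0 * h 0 0 + g 0 1 * h 1 0 := by
  simp [Matrix.mul_apply, Fin.sum_univ_two]
theorem mul01 (g h : SpecialLinearGroup (Fin 2) F) : (g * h) 0 1 = g 0 0 * h 0 1 + g 0 1 * h 1 1 := by
  simp [Matrix.mul_apply, Fin.sum_univ_two]
theorem mul10 (g h : SpecialLinearGroup (Fin 2) F) : (g * h) 1 0 = g 1 0 * h 0 0 + g 1 1 * h 1 0 := by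
  simp [Matrix.mul_apply, Fin.sum_univ_two]
theorem mul11 (g h : SpecialLinearGroup (Fin 2) F) : (g * h) 1 1 = g 1 0 * h 0 1 + g 1 1 * h 1 1 := by
  simp [Matrix.mul_apply, Fin.sum_univ_two]

@[simp] theorem n00 (x : F) : n x 0 0 = 1 := rfl
@[simp] theorem n01 (x : F) : n x 0 1 = x := rfl
@[simp] theorem n10 (x : F) : n x 1 0 = 0 := rfl
@[simp] theorem n11 (x : F) : n x 1 1 = 1 := rfl
@[simp] theorem t00 (x : Fˣ) : t x 0 0 = x := rfl
@[simp] theorem t01 (x : Fˣ) : t x 0 1 = 0 := rfl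
@[simp] theorem t10 (x : Fˣ) : t x 1 0 = 0 := rfl
@[simp] theorem t11 (x : Fˣ) : t x 1 1 = (x : F)⁻¹ := rfl
@[simp] theorem w00 : (w : SpecialLinearGroup (Fin 2) F) 0 0 = 0 := rfl
@[simp] theorem w01 : (w : SpecialLinearGroup (Fin 2) F) 0 1 = 1 := rfl
@[simp] theorem w10 : (w : SpecialLinearGroup (Fin 2) F) 1 0 = -1 := rfl
@[simp] theorem w11 : (w : SpecialLinearGroup (Fin 2) F) 1 1 = 0 := rfl
@[simp] theorem tau00 (g : SpecialLinearGroup (Fin 2) F) : tau g 0 0 = g 1 1 := rfl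
@[simp] theorem tau01 (g : SpecialLinearGroup (Fin 2) F) : tau g 0 1 = g 0 1 := rfl
@[simp] theorem tau10 (g : SpecialLinearGroup (Fin 2) F) : tau g 1 0 = g 1 0 := rfl
@[simp] theorem tau11 (g : SpecialLinearGroup (Fin 2) F) : tau g 1 1 = g 0 0 := rfl
@[simp] theorem neg00 : (-1 : SpecialLinearGroup (Fin 2) F) 0 0 = -1 := by
  rw [SpecialLinearGroup.coe_neg]; simp
@[simp] theorem neg01 : (-1 : SpecialLinearGroup (Fin 2) F) 0 1 = 0 := by
  rw [SpecialLinearGroup.coe_neg]; simp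
@[simp] theorem neg10 : (-1 : SpecialLinearGroup (Fin 2) F) 1 0 = 0 := by
  rw [SpecialLinearGroup.coe_neg]; simp
@[simp] theorem neg11 : (-1 : SpecialLinearGroup (Fin 2) F) 1 1 = -1 := by
  rw [SpecialLinearGroup.coe_neg]; simp

theorem n_add (x y : F) : n (x + y) = n x * n y := by
  apply ext2 <;> simp [mul00, mul01, mul10, mul11, add_comm]

theorem n_zero : n (0 : F) = 1 := by
  apply ext2 <;> simp

theorem t_mul (x y : Fˣ) : t (x * y) = t x * t y := by
  apply ext2 <;> simp [mul00, mul01, mul10, mul11, mul_comm]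

theorem t_one : t (1 : Fˣ) = 1 := by
  apply ext2 <;> simp

theorem t_n (a : Fˣ) (x : F) : t a * n x = n (a ^ 2 * x) * t a := by
  have := a.ne_zero
  apply ext2 <;> simp [mul00, mul01, mul10, mul11]
  field_simp

theorem t_w (a : Fˣ) : t a * w = w * t a⁻¹ := by
  apply ext2 <;> simp [mul00, mul01, mul10, mul11]

theorem w_w : w * w = (-1 : SpecialLinearGroup (Fin 2) F) := by
  apply ext2 <;> simp [mul00, mul01, mul10, mul11]

theorem t_i (a : Fˣ) (ha : (a : F) * a = -1) : t a * t a = -1 := by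
  have h0 := a.ne_zero
  apply ext2 <;> simp [mul00, mul01, mul10, mul11, ha]
  rw [← mul_inv, ha]; norm_num

theorem tau_mul (g h : SpecialLinearGroup (Fin 2) F) : tau (g * h) = tau h * tau g := by
  apply ext2 <;> simp [mul00, mul01, mul10, mul11] <;> ring

theorem tau_n (x : F) : tau (n x) = n x := by
  apply ext2 <;> simp

theorem det2 (g : SpecialLinearGroup (Fin 2) F) : g 0 0 * g 1 1 - g 0 1 * g 1 0 = 1 := by
  have := g.det_coe
  rwa [Matrix.det_fin_two] at this

theorem tau_big (g : SpecialLinearGroup (Fin 2) F) (h : g 1 0 ≠ 0) :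
    tau g = n ((g 1 1 - g 0 0) / g 1 0) * g * n (-((g 1 1 - g 0 0) / g 1 0)) := by
  apply ext2 <;> simp [mul00, mul01, mul10, mul11] <;> field_simp <;> ring

theorem small_n (g : SpecialLinearGroup (Fin 2) F) (h : g 1 0 = 0) (x : F) :
    g * n x = n (g 0 0 ^ 2 * x) * g := by
  have := det2 g
  rw [h] at this
  apply ext2 <;> simp [mul00, mul01, mul10, mul11, h]
  linear_combination (- g 0 0 * x) * this

theorem bruhat_small (g : SpecialLinearGroup (Fin 2) F) (h : g 1 0 = 0) :
    ∃ (x : F) (a : Fˣ), g = n x * t a := by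
  have hd := det2 g
  rw [h, mul_zero, sub_zero] at hd
  have h0 : g 0 0 ≠ 0 := left_ne_zero_of_mul_eq_one hd
  refine ⟨g 0 1 * g 0 0, Units.mk0 _ h0, ?_⟩
  apply ext2 <;> simp [mul00, mul01, mul10, mul11, h, h0]
  exact eq_inv_of_mul_eq_one_right hd

theorem bruhat_big (g : SpecialLinearGroup (Fin 2) F) (h : g 1 0 ≠ 0) :
    ∃ (x y : F) (a : Fˣ), g = n x * w * t a * n y := by
  have hd := det2 g
  refine ⟨g 0 0 / g 1 0, g 1 1 / g 1 0, Units.mk0 (- g 1 0) (neg_ne_zero.2 h), ?_⟩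
  apply ext2 <;> simp [mul00, mul01, mul10, mul11] <;> field_simp
  linear_combination -hd

end group

section rep
variable {F : Type*} [Field F] [Fintype F]
  {V : Type*} [AddCommGroup V] [Module ℂ V]
  (π : Representation ℂ (SpecialLinearGroup (Fin 2) F) V)

/-- The projector on the `ψ`-eigenspace of the unipotent group. -/
noncomputable def P (ψ : AddChar F ℂ) : Module.End ℂ V :=
  (Fintype.card F : ℂ)⁻¹ • ∑ x : F, ψ (-x) • π (n x)

theorem card_ne : (Fintype.card F : ℂ) ≠ 0 := by
  exact_mod_cast Fintype.card_ne_zero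

theorem P_apply (ψ : AddChar F ℂ) (v : V) :
    P π ψ v = (Fintype.card F : ℂ)⁻¹ • ∑ x : F, ψ (-x) • π (n x) v := by
  simp [P, LinearMap.sum_apply]

theorem P_n (ψ : AddChar F ℂ) (y : F) : P π ψ * π (n y) = ψ y • P π ψ := by
  rw [P, smul_mul_assoc, smul_comm (ψ y), Finset.sum_mul]
  congr 1
  rw [Finset.smul_sum, ← Equiv.sum_comp (Equiv.addRight y) (fun x => ψ y • ψ (-x) • π (n x))]
  apply Finset.sum_congr rfl
  intro x _
  rw [smul_mul_assoc, ← map_mul, ← n_add, smul_smul, ← AddChar.map_add_eq_mul]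
  simp

theorem n_P (ψ : AddChar F ℂ) (y : F) : π (n y) * P π ψ = ψ y • P π ψ := by
  rw [← P_n, P, mul_smul_comm, smul_mul_assoc, Finset.sum_mul, Finset.mul_sum]
  congr 1
  apply Finset.sum_congr rfl
  intro x _
  rw [smul_mul_assoc, mul_smul_comm, ← map_mul, ← map_mul, ← n_add, ← n_add, add_comm]

theorem n_P_apply (ψ : AddChar F ℂ) (y : F) (v : V) : π (n y) (P π ψ v) = ψ y • P π ψ v := by
  have := congrArg (fun f => f v) (n_P π ψ y)
  simpa using this

theorem P_of_eig (ψ : AddChar F ℂ) (v : V) (h : ∀ x, π (n x) v = ψ x • v) : P π ψ v = v := by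
  rw [P_apply]
  simp only [h, smul_smul, ← AddChar.map_add_eq_mul, neg_add_cancel, AddChar.map_zero_eq_one, one_smul,
    Finset.sum_const, Finset.card_univ, ← Nat.cast_smul_eq_nsmul ℂ]
  rw [inv_mul_cancel₀ card_ne, one_smul]

theorem P_P (ψ : AddChar F ℂ) (v : V) : P π ψ (P π ψ v) = P π ψ v :=
  P_of_eig π ψ _ fun x => n_P_apply π ψ x v

theorem sum_P (v : V) : ∑ ψ : AddChar F ℂ, P π ψ v = v := by
  classical
  simp only [P_apply]
  rw [← Finset.smul_sum, Finset.sum_comm]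
  simp only [← Finset.sum_smul]
  rw [Finset.sum_eq_single 0]
  · rw [AddChar.sum_apply_eq_ite]
    simp [n_zero, smul_smul]
  · intro x _ hx
    rw [AddChar.sum_apply_eq_ite, if_neg (by simpa using hx), zero_smul]
  · simp

theorem exists_ne (ψ : AddChar F ℂ) (hψ : ψ ≠ 1) (b : F) (hb : b ≠ 1) : ∃ x, ψ x ≠ ψ (b * x) := by
  by_contra! h
  apply hψ
  ext y
  have hb' : b - 1 ≠ 0 := sub_ne_zero.2 hb
  have h1 := h (y / (b - 1))
  have h2 : b * (y / (b - 1)) = y + y / (b - 1) := by field_simp; ring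
  rw [h2, AddChar.map_add_eq_mul] at h1
  have h3 : ψ (y / (b - 1)) ≠ 0 := by
    intro h0
    have := AddChar.map_add_eq_mul ψ (y / (b - 1)) (-(y / (b - 1)))
    rw [h0, zero_mul, add_neg_cancel, AddChar.map_zero_eq_one] at this
    exact one_ne_zero this
  rw [AddChar.one_apply]
  exact (mul_right_cancel₀ h3 (by rw [one_mul]; exact h1)).symm

theorem PgP_zero (ψ : AddChar F ℂ) (hψ : ψ ≠ 1) (g : SpecialLinearGroup (Fin 2) F)
    (h : g 1 0 = 0) (h2 : g 0 0 ^ 2 ≠ 1) : P π ψ * π g * P π ψ = 0 := by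
  obtain ⟨x, hx⟩ := exists_ne ψ hψ _ h2
  have h1 : P π ψ * π (g * n x) * P π ψ = ψ x • (P π ψ * π g * P π ψ) := by
    rw [map_mul, mul_assoc, mul_assoc, n_P, mul_smul_comm, mul_smul_comm, mul_assoc]
  rw [small_n g h, map_mul, ← mul_assoc, P_n, smul_mul_assoc, smul_mul_assoc] at h1
  have h3 := sub_eq_zero.2 h1
  rw [← sub_smul] at h3
  exact (smul_eq_zero.1 h3).resolve_left (sub_ne_zero.2 hx.symm)

theorem PgP_tau (ψ : AddChar F ℂ) (hψ : ψ ≠ 1) (g : SpecialLinearGroup (Fin 2) F) :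
    P π ψ * π (tau g) * P π ψ = P π ψ * π g * P π ψ := by
  by_cases h : g 1 0 = 0
  · have hd := det2 g
    rw [h, mul_zero, sub_zero] at hd
    by_cases h2 : g 0 0 ^ 2 = 1
    · have h3 : g 1 1 = g 0 0 := by linear_combination g 0 0 * hd - g 1 1 * h2
      have : tau g = g := by apply ext2 <;> simp [h3]
      rw [this]
    · rw [PgP_zero π ψ hψ g h h2, PgP_zero π ψ hψ (tau g) (by simpa using h)]
      intro h4
      rw [tau00] at h4
      apply h2
      linear_combination (g 0 0 * g 1 1 + 1) * hd - g 0 0 ^2 * h4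
  · rw [tau_big g h, map_mul, map_mul, ← mul_assoc, ← mul_assoc, P_n, mul_assoc, n_P,
      mul_smul_comm, smul_mul_assoc, smul_mul_assoc, smul_smul, ← AddChar.map_add_eq_mul,
      neg_add_cancel, AddChar.map_zero_eq_one, one_smul]

theorem PgPhP (ψ : AddChar F ℂ) (g h : SpecialLinearGroup (Fin 2) F) :
    P π ψ * π g * P π ψ * π h * P π ψ =
      (Fintype.card F : ℂ)⁻¹ • ∑ x : F, ψ (-x) • (P π ψ * π (g * n x * h) * P π ψ) := by
  have : P π ψ * π g * P π ψ * π h * P π ψ = P π ψ * π g * ((Fintype.card F : ℂ)⁻¹ • ∑ x : F, ψ (-x) • π (n x)) * π h * P π ψ := rfl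
  rw [this]
  simp only [mul_smul_comm, smul_mul_assoc, Finset.mul_sum, Finset.sum_mul, map_mul, mul_assoc]

theorem PgP_comm (ψ : AddChar F ℂ) (hψ : ψ ≠ 1) (g h : SpecialLinearGroup (Fin 2) F) :
    P π ψ * π g * P π ψ * π h * P π ψ = P π ψ * π h * P π ψ * π g * P π ψ := by
  have hPP : P π ψ * P π ψ = P π ψ := LinearMap.ext (P_P π ψ)
  calc _ = P π ψ * π (tau h) * P π ψ * π (tau g) * P π ψ := by
        rw [PgPhP, PgPhP]
        congr 1
        apply Finset.sum_congr rfl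
        intro x _
        rw [← PgP_tau π ψ hψ (g * n x * h), tau_mul, tau_mul, tau_n, ← mul_assoc (tau h)]
    _ = (P π ψ * π (tau h) * P π ψ) * (P π ψ * π (tau g) * P π ψ) := by
        simp only [mul_assoc]; rw [← mul_assoc (P π ψ) (P π ψ), hPP]
    _ = (P π ψ * π h * P π ψ) * (P π ψ * π g * P π ψ) := by
        rw [PgP_tau π ψ hψ, PgP_tau π ψ hψ]
    _ = _ := by
        simp only [mul_assoc]; rw [← mul_assoc (P π ψ) (P π ψ), hPP]

theorem span_orbit 
    (hirr : ∀ W : Submodule ℂ V, (∀ g, ∀ v ∈ W, π g v ∈ W) → W = ⊥ ∨ W = ⊤)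
    (x : V) (hx : x ≠ 0) (W : Submodule ℂ V) (hW : ∀ g, π g x ∈ W) : W = ⊤ := by
  have h := hirr (Submodule.span ℂ (Set.range fun g => π g x)) (by
    intro g v hv
    induction hv using Submodule.span_induction with
    | mem y hy =>
      obtain ⟨h, rfl⟩ := hy
      apply Submodule.subset_span
      exact ⟨g * h, by simp [map_mul]⟩
    | zero => simp
    | add a b _ _ ha hb => rw [map_add]; exact add_mem ha hb
    | smul c a _ ha => rw [map_smul]; exact Submodule.smul_mem _ _ ha)
  have hle : Submodule.span ℂ (Set.range fun g => π g x) ≤ W := by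
    rw [Submodule.span_le]; rintro _ ⟨g, rfl⟩; exact hW g
  rcases h with h | h
  · exfalso
    apply hx
    have : x ∈ Submodule.span ℂ (Set.range fun g => π g x) :=
      Submodule.subset_span ⟨1, by simp⟩
    rw [h] at this
    simpa using this
  · rw [h] at hle; exact top_le_iff.1 hle

theorem mult_one [FiniteDimensional ℂ V]
    (hirr : ∀ W : Submodule ℂ V, (∀ g, ∀ v ∈ W, π g v ∈ W) → W = ⊥ ∨ W = ⊤)
    (ψ : AddChar F ℂ) (hψ : ψ ≠ 1) (v0 : V) (h0 : v0 ≠ 0) (hv0 : P π ψ v0 = v0)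
    (v : V) (hv : P π ψ v = v) : ∃ c : ℂ, v = c • v0 := by
  -- each `P g P` is scalar on the range of `P`
  have key : ∀ g, ∃ c : ℂ, ∀ u, P π ψ (π g (P π ψ u)) = c • P π ψ u := by
    intro g
    let R : Submodule ℂ V := LinearMap.range (P π ψ)
    have hR : ∀ u ∈ R, (P π ψ * π g) u ∈ R := fun u _ => ⟨π g u, rfl⟩
    have : Nontrivial R := ⟨⟨⟨v0, v0, hv0⟩, 0, fun h => h0 (congrArg Subtype.val h)⟩⟩
    obtain ⟨c, hc⟩ := Module.End.exists_eigenvalue ((P π ψ * π g).restrict hR)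
    obtain ⟨x, hx⟩ := hc.exists_hasEigenvector
    have hx1 := hx.apply_eq_smul
    have hx2 : P π ψ (π g x) = c • (x : V) := congrArg Subtype.val hx1
    have hx0 : (x : V) ≠ 0 := fun h => hx.2 (Subtype.ext h)
    have hPx : P π ψ (x : V) = x := by
      obtain ⟨y, hy⟩ := x.2
      rw [← hy, P_P]
    refine ⟨c, ?_⟩
    have htop := span_orbit π hirr x hx0
      (LinearMap.ker (P π ψ * π g * P π ψ - c • P π ψ)) (by
        intro h
        rw [LinearMap.mem_ker]
        have := congrArg (fun f => f (x : V)) (PgP_comm π ψ hψ g h)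
        simp only [Module.End.mul_apply, hPx, hx2, map_smul] at this
        simp [this])
    intro u
    have hu : u ∈ LinearMap.ker (P π ψ * π g * P π ψ - c • P π ψ) := by rw [htop]; trivial
    rw [LinearMap.mem_ker] at hu
    exact sub_eq_zero.1 hu
  have htop := span_orbit π hirr v0 h0 ((Submodule.span ℂ {v0}).comap (P π ψ)) (by
    intro g
    obtain ⟨c, hc⟩ := key g
    rw [Submodule.mem_comap, Submodule.mem_span_singleton]
    refine ⟨c, ?_⟩
    have := hc v0
    rw [hv0] at this
    exact this.symm)
  have hm : v ∈ (Submodule.span ℂ {v0}).comap (P π ψ) := by rw [htop]; trivial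
  rw [Submodule.mem_comap, hv, Submodule.mem_span_singleton] at hm
  obtain ⟨c, hc⟩ := hm
  exact ⟨c, hc.symm⟩

section form
variable (B : V →ₗ[ℂ] V →ₗ[ℂ] ℂ)

theorem B_n (hinv : ∀ (g : SpecialLinearGroup (Fin 2) F) (v w : V), B (π g v) (π g w) = B v w)
    (x : V) (hx : ∀ y, π (n y) x = x) (y : F) (v : V) : B x (π (n y) v) = B x v := by
  conv_lhs => rw [← hx y]
  exact hinv _ _ _

theorem B_w (hinv : ∀ (g : SpecialLinearGroup (Fin 2) F) (v w : V), B (π g v) (π g w) = B v w)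
    (hsymm : ∀ v w, B v w = B w v) (hneg : ∀ v, π (-1) v = -v) (x : V) : B x (π w x) = 0 := by
  have h := hinv w x (π w x)
  rw [← Module.End.mul_apply, ← map_mul, w_w, hneg, map_neg, hsymm] at h
  exact neg_eq_self.1 h

theorem B_big (hinv : ∀ (g : SpecialLinearGroup (Fin 2) F) (v w : V), B (π g v) (π g w) = B v w)
    (hsymm : ∀ v w, B v w = B w v) (hneg : ∀ v, π (-1) v = -v) (x : V)
    (hx : ∀ y, π (n y) x = x) (χ : Fˣ → ℂ) (hχ : ∀ a, π (t a) x = χ a • x)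
    (g : SpecialLinearGroup (Fin 2) F) (hg : g 1 0 ≠ 0) : B x (π g x) = 0 := by
  obtain ⟨y, z, a, rfl⟩ := bruhat_big g hg
  simp only [map_mul, Module.End.mul_apply, hx, hχ, map_smul]
  rw [B_n π B hinv x hx, B_w π B hinv hsymm hneg, smul_zero]

theorem iso_zero (hirr : ∀ W : Submodule ℂ V, (∀ g, ∀ v ∈ W, π g v ∈ W) → W = ⊥ ∨ W = ⊤)
    (hinv : ∀ (g : SpecialLinearGroup (Fin 2) F) (v w : V), B (π g v) (π g w) = B v w)
    (hsymm : ∀ v w, B v w = B w v) (hneg : ∀ v, π (-1) v = -v)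
    (hnondeg : ∀ v : V, (∀ w : V, B v w = 0) → v = 0) (x : V)
    (hx : ∀ y, π (n y) x = x) (χ : Fˣ → ℂ) (hχ : ∀ a, π (t a) x = χ a • x)
    (h : B x x = 0) : x = 0 := by
  by_contra h0
  have htop := span_orbit π hirr x h0 (LinearMap.ker (B x)) (by
    intro g
    rw [LinearMap.mem_ker]
    by_cases hg : g 1 0 = 0
    · obtain ⟨y, a, rfl⟩ := bruhat_small g hg
      simp only [map_mul, Module.End.mul_apply, hx, hχ, map_smul, h, smul_zero]
    · exact B_big π B hinv hsymm hneg x hx χ hχ g hg)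
  apply h0
  apply hnondeg
  intro v
  have : v ∈ LinearMap.ker (B x) := by rw [htop]; trivial
  exact this

theorem cusp_eig (hirr : ∀ W : Submodule ℂ V, (∀ g, ∀ v ∈ W, π g v ∈ W) → W = ⊥ ∨ W = ⊤)
    (hinv : ∀ (g : SpecialLinearGroup (Fin 2) F) (v w : V), B (π g v) (π g w) = B v w)
    (hsymm : ∀ v w, B v w = B w v) (hneg : ∀ v, π (-1) v = -v)
    (hnondeg : ∀ v : V, (∀ w : V, B v w = 0) → v = 0) (x : V)
    (hx : ∀ y, π (n y) x = x) (χ : Fˣ → ℂ) (hχ : ∀ a, π (t a) x = χ a • x) : x = 0 := by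
  apply iso_zero π B hirr hinv hsymm hneg hnondeg x hx χ hχ
  by_contra hβ
  have hx0 : x ≠ 0 := by rintro rfl; simp at hβ
  have hχ2 : ∀ a, χ a * χ a = 1 := by
    intro a
    have := hinv (t a) x x
    rw [hχ] at this
    simp only [map_smul, LinearMap.smul_apply, smul_eq_mul] at this
    apply mul_right_cancel₀ hβ
    linear_combination this
  have hχi : ∀ a, χ a⁻¹ = χ a := by
    intro a
    have h1 : π (t (a * a⁻¹)) x = x := by rw [mul_inv_cancel, t_one, map_one]; rfl
    rw [t_mul, map_mul, Module.End.mul_apply, hχ, map_smul, hχ, smul_smul] at h1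
    have h2 : χ a⁻¹ * χ a = 1 := by
      have h3 : (χ a⁻¹ * χ a - 1) • x = 0 := by rw [sub_smul, h1, one_smul, sub_self]
      exact sub_eq_zero.1 ((smul_eq_zero.1 h3).resolve_right hx0)
    linear_combination χ a * h2 - χ a⁻¹ * hχ2 a
  set y : V := ∑ s : F, π (n s) (π w x) with hy
  have hyU : ∀ r, π (n r) y = y := by
    intro r
    rw [hy, map_sum]
    conv_rhs => rw [← Equiv.sum_comp (Equiv.addLeft r)]
    apply Finset.sum_congr rfl
    intro s _
    rw [← Module.End.mul_apply, ← map_mul, ← n_add]; rfl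
  have hyT : ∀ a, π (t a) y = χ a • y := by
    intro a
    have ha : (a : F) ^ 2 ≠ 0 := pow_ne_zero _ a.ne_zero
    rw [hy, map_sum, Finset.smul_sum]
    conv_rhs => rw [← Equiv.sum_comp (Equiv.mulLeft₀ _ ha)]
    apply Finset.sum_congr rfl
    intro s _
    rw [← Module.End.mul_apply, ← map_mul, t_n, map_mul, Module.End.mul_apply,
      ← Module.End.mul_apply (π (t a)), ← map_mul, t_w, map_mul, Module.End.mul_apply, hχ, hχi,
      map_smul, map_smul]
    rfl
  have hxy : B x y = 0 := by
    rw [hy, map_sum]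
    apply Finset.sum_eq_zero
    intro s _
    rw [B_n π B hinv x hx, B_w π B hinv hsymm hneg]
  have hyw : B y (π w x) = B x x := by
    rw [hy, map_sum, LinearMap.sum_apply, Finset.sum_eq_single 0]
    · rw [n_zero, map_one, Module.End.one_apply, hinv]
    · intro s _ hs
      rw [hsymm, ← hinv w, ← Module.End.mul_apply, ← map_mul, w_w, hneg,
        ← Module.End.mul_apply, ← map_mul, ← Module.End.mul_apply, ← map_mul, map_neg,
        LinearMap.neg_apply, B_big π B hinv hsymm hneg x hx χ hχ, neg_zero]
      simpa [mul10, mul11] using hs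
    · simp
  obtain ⟨α, hα⟩ := IsAlgClosed.exists_eq_mul_self (-(B y y) / B x x)
  have hz : α • x + y = 0 := by
    apply iso_zero π B hirr hinv hsymm hneg hnondeg _ _ χ
    · intro a; rw [map_add, map_smul, hχ, hyT, smul_add, smul_comm]
    · simp only [map_add, map_smul, LinearMap.add_apply, LinearMap.smul_apply, smul_eq_mul, hxy,
        hsymm y x]
      rw [div_eq_iff hβ] at hα
      linear_combination -hα
    · intro r; rw [map_add, map_smul, hx, hyU]
  have h1 : B (α • x + y) (π w x) = 0 := by rw [hz]; simp
  simp only [map_add, map_smul, LinearMap.add_apply, LinearMap.smul_apply, smul_eq_mul, hyw,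
    B_w π B hinv hsymm hneg] at h1
  apply hβ
  simpa using h1

theorem cusp [FiniteDimensional ℂ V]
    (hirr : ∀ W : Submodule ℂ V, (∀ g, ∀ v ∈ W, π g v ∈ W) → W = ⊥ ∨ W = ⊤)
    (hinv : ∀ (g : SpecialLinearGroup (Fin 2) F) (v w : V), B (π g v) (π g w) = B v w)
    (hsymm : ∀ v w, B v w = B w v) (hneg : ∀ v, π (-1) v = -v)
    (hnondeg : ∀ v : V, (∀ w : V, B v w = 0) → v = 0) (x : V)
    (hx : ∀ y, π (n y) x = x) : x = 0 := by
  by_contra hx0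
  let R : Submodule ℂ V := ⨅ y : F, LinearMap.ker (π (n y) - 1)
  have hR : ∀ v, v ∈ R ↔ ∀ y, π (n y) v = v := by
    intro v
    simp [R, Submodule.mem_iInf, sub_eq_zero]
  have hRt : ∀ a, ∀ v ∈ R, π (t a) v ∈ R := by
    intro a v hv
    rw [hR] at hv ⊢
    intro y
    have ha := a.ne_zero
    have : y = (a : F) ^ 2 * (y / a ^ 2) := by field_simp
    rw [this, ← Module.End.mul_apply, ← map_mul, ← t_n, map_mul, Module.End.mul_apply, hv]
  have : Nontrivial R := ⟨⟨⟨x, (hR x).2 hx⟩, 0, fun h => hx0 (congrArg Subtype.val h)⟩⟩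
  obtain ⟨g, hg⟩ := IsCyclic.exists_generator (α := Fˣ)
  obtain ⟨c, hc⟩ := Module.End.exists_eigenvalue ((π (t g)).restrict (hRt g))
  obtain ⟨u, hu⟩ := hc.exists_hasEigenvector
  have hu1 : π (t g) u = c • (u : V) := congrArg Subtype.val hu.apply_eq_smul
  have hu0 : (u : V) ≠ 0 := fun h => hu.2 (Subtype.ext h)
  have hpow : ∀ k : ℕ, π (t (g ^ k)) u = c ^ k • (u : V) := by
    intro k
    induction k with
    | zero => simp [t_one]
    | succ k ih =>
      rw [pow_succ, t_mul, map_mul, Module.End.mul_apply, hu1, map_smul, ih, smul_smul, pow_succ']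
  have hex : ∀ a : Fˣ, ∃ d : ℂ, π (t a) u = d • (u : V) := by
    intro a
    obtain ⟨k, hk⟩ := (mem_powers_iff_mem_zpowers (x := g)).2 (hg a)
    exact ⟨c ^ k, by rw [← hpow k]; simp only at hk; rw [hk]⟩
  choose χ hχ using hex
  exact hu0 (cusp_eig π B hirr hinv hsymm hneg hnondeg u ((hR _).1 u.2) χ hχ)

theorem exists_psi [FiniteDimensional ℂ V] [Nontrivial V]
    (hcusp : ∀ x : V, (∀ y, π (n y) x = x) → x = 0) :
    ∃ ψ : AddChar F ℂ, ψ ≠ 1 ∧ ∃ v, v ≠ 0 ∧ P π ψ v = v := by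
  obtain ⟨v, hv⟩ := _root_.exists_ne (0 : V)
  have : ∃ ψ : AddChar F ℂ, P π ψ v ≠ 0 := by
    by_contra! h
    apply hv
    rw [← sum_P π v]
    exact Finset.sum_eq_zero fun ψ _ => h ψ
  obtain ⟨ψ, h⟩ := this
  refine ⟨ψ, ?_, _, h, P_P π ψ v⟩
  rintro rfl
  apply h
  apply hcusp
  intro y
  rw [n_P_apply, AddChar.one_apply, one_smul]

theorem case_one [FiniteDimensional ℂ V]
    (hirr : ∀ W : Submodule ℂ V, (∀ g, ∀ v ∈ W, π g v ∈ W) → W = ⊥ ∨ W = ⊤)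
    (hinv : ∀ (g : SpecialLinearGroup (Fin 2) F) (v w : V), B (π g v) (π g w) = B v w)
    (hsymm : ∀ v w, B v w = B w v) (hneg : ∀ v, π (-1) v = -v)
    (hnondeg : ∀ v : V, (∀ w : V, B v w = 0) → v = 0)
    (ψ : AddChar F ℂ) (hψ : ψ ≠ 1) (v : V) (h0 : v ≠ 0) (hv : P π ψ v = v)
    (a : Fˣ) (ha : (a : F) * a = -1) : False := by
  have htt : ∀ u, π (t a) (π (t a) u) = -u := fun u => by
    rw [← Module.End.mul_apply, ← map_mul, t_i a ha, hneg]
  have hvn : ∀ x, π (n x) v = ψ x • v := fun x => by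
    have := n_P_apply π ψ x v
    rwa [hv] at this
  have hBt : B v (π (t a) v) = 0 := by
    have := hinv (t a) v (π (t a) v)
    rw [htt, map_neg, hsymm] at this
    exact neg_eq_self.1 this
  apply h0
  apply hnondeg
  intro y
  have h1 : B v (P π ψ⁻¹ y) = B v y := by
    rw [P_apply, map_smul, map_sum]
    have : ∀ x, B v (ψ⁻¹ (-x) • π (n x) y) = B v y := by
      intro x
      rw [← hinv (n x) v y, hvn, map_smul, map_smul, LinearMap.smul_apply, AddChar.inv_apply, neg_neg]
    simp only [this, Finset.sum_const, Finset.card_univ, nsmul_eq_mul, smul_eq_mul]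
    rw [inv_mul_cancel_left₀ card_ne]
  have h2 : P π ψ (π (t a) (P π ψ⁻¹ y)) = π (t a) (P π ψ⁻¹ y) := by
    apply P_of_eig
    intro x
    have hx : n x * t a = t a * n (-x) := by
      rw [t_n, pow_two, ha]; simp
    rw [← Module.End.mul_apply, ← map_mul, hx, map_mul, Module.End.mul_apply, n_P_apply, map_smul,
      AddChar.inv_apply, neg_neg]
  obtain ⟨c, hc⟩ := mult_one π hirr ψ hψ v h0 hv _ h2
  have h3 : P π ψ⁻¹ y = -(c • π (t a) v) := by
    rw [← map_smul, ← hc, htt, neg_neg]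
  rw [← h1, h3, map_neg, map_smul, hBt, smul_zero, neg_zero]

theorem trace_inv [FiniteDimensional ℂ V]
    (hinv : ∀ (g : SpecialLinearGroup (Fin 2) F) (v w : V), B (π g v) (π g w) = B v w)
    (hnondeg : ∀ v : V, (∀ w : V, B v w = 0) → v = 0) (g : SpecialLinearGroup (Fin 2) F) :
    LinearMap.trace ℂ V (π g⁻¹) = LinearMap.trace ℂ V (π g) := by
  have hinj : Function.Injective B := by
    rw [injective_iff_map_eq_zero]
    intro v hv
    exact hnondeg v fun w => by rw [hv]; rfl
  let e : V ≃ₗ[ℂ] Module.Dual ℂ V :=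
    LinearEquiv.ofInjectiveOfFinrankEq B hinj Subspace.dual_finrank_eq.symm
  have he : ∀ v, e v = B v := fun v => rfl
  rw [← LinearMap.trace_transpose', ← LinearMap.trace_conj' (π g) e]
  congr 1
  apply LinearMap.ext
  intro f
  obtain ⟨v, rfl⟩ := e.surjective f
  rw [LinearEquiv.conj_apply_apply, LinearEquiv.symm_apply_apply, he, he]
  apply LinearMap.ext
  intro u
  rw [Module.Dual.transpose_apply, LinearMap.comp_apply, ← hinv g, ← Module.End.mul_apply, ← map_mul,
    mul_inv_cancel, map_one]
  rfl

theorem trace_n [FiniteDimensional ℂ V]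
    (hinv : ∀ (g : SpecialLinearGroup (Fin 2) F) (v w : V), B (π g v) (π g w) = B v w)
    (hnondeg : ∀ v : V, (∀ w : V, B v w = 0) → v = 0)
    (hsq : ¬ IsSquare (-1 : F)) (x : F) (hx : x ≠ 0) :
    LinearMap.trace ℂ V (π (n x)) = LinearMap.trace ℂ V (π (n 1)) := by
  have hF : ringChar F ≠ 2 := fun h => hsq (FiniteField.isSquare_of_char_two h _)
  have h1 : ∀ y : F, y ≠ 0 → IsSquare y →
      LinearMap.trace ℂ V (π (n y)) = LinearMap.trace ℂ V (π (n 1)) := by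
    rintro y hy ⟨a, rfl⟩
    have ha : a ≠ 0 := left_ne_zero_of_mul hy
    have h := t_n (Units.mk0 a ha) 1
    rw [mul_one, Units.val_mk0, pow_two] at h
    have h2 : n (a * a) = t (Units.mk0 a ha) * n 1 * (t (Units.mk0 a ha))⁻¹ := by
      rw [h]; group
    rw [h2, map_mul, LinearMap.trace_mul_comm, ← map_mul]
    congr 2; group
  by_cases hs : IsSquare x
  · exact h1 x hx hs
  · have hneg : n (-x) = (n x)⁻¹ := by
      rw [eq_inv_iff_mul_eq_one, ← n_add, neg_add_cancel, n_zero]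
    rw [← trace_inv π B hinv hnondeg, ← hneg]
    apply h1 _ (neg_ne_zero.2 hx)
    classical
    rw [← quadraticChar_one_iff_isSquare (neg_ne_zero.2 hx), neg_eq_neg_one_mul, map_mul,
      quadraticChar_neg_one_iff_not_isSquare.2 hs, quadraticChar_neg_one_iff_not_isSquare.2 hsq]
    norm_num

theorem finrank_eq [FiniteDimensional ℂ V]
    (hirr : ∀ W : Submodule ℂ V, (∀ g, ∀ v ∈ W, π g v ∈ W) → W = ⊥ ∨ W = ⊤)
    (hinv : ∀ (g : SpecialLinearGroup (Fin 2) F) (v w : V), B (π g v) (π g w) = B v w)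
    (hnondeg : ∀ v : V, (∀ w : V, B v w = 0) → v = 0)
    (hcusp : ∀ x : V, (∀ y, π (n y) x = x) → x = 0)
    (hsq : ¬ IsSquare (-1 : F))
    (ψ : AddChar F ℂ) (hψ : ψ ≠ 1) (v : V) (h0 : v ≠ 0) (hv : P π ψ v = v) :
    Module.finrank ℂ V + 1 = Fintype.card F := by
  classical
  set τ := LinearMap.trace ℂ V (π (n 1)) with hτ
  have hf : ∀ x : F, LinearMap.trace ℂ V (π (n x)) =
      τ + if x = 0 then (Module.finrank ℂ V : ℂ) - τ else 0 := by
    intro x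
    split_ifs with h
    · rw [h, n_zero, map_one, LinearMap.trace_one]; ring
    · rw [add_zero, trace_n π B hinv hnondeg hsq x h]
  have htr : ∀ φ : AddChar F ℂ, LinearMap.trace ℂ V (P π φ) = (Fintype.card F : ℂ)⁻¹ *
      (τ * (∑ x : F, φ x) + ((Module.finrank ℂ V : ℂ) - τ)) := by
    intro φ
    rw [P, map_smul, map_sum, smul_eq_mul]
    simp only [map_smul, smul_eq_mul, hf, mul_add, Finset.sum_add_distrib, mul_ite, mul_zero,
      Finset.sum_ite_eq', Finset.mem_univ, if_true, neg_zero, AddChar.map_zero_eq_one, one_mul]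
    rw [← Equiv.sum_comp (Equiv.neg F) (fun x => φ x), Finset.mul_sum]
    simp [mul_comm]
    rw [Finset.sum_mul, Finset.mul_sum]
  have hP1 : P π (1 : AddChar F ℂ) = 0 := by
    apply LinearMap.ext
    intro u
    apply hcusp
    intro y
    rw [n_P_apply, AddChar.one_apply, one_smul]
  have hproj : LinearMap.IsProj (Submodule.span ℂ {v}) (P π ψ) := by
    constructor
    · intro u
      obtain ⟨c, hc⟩ := mult_one π hirr ψ hψ v h0 hv _ (P_P π ψ u)
      rw [Submodule.mem_span_singleton]
      exact ⟨c, hc.symm⟩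
    · intro u hu
      obtain ⟨c, rfl⟩ := Submodule.mem_span_singleton.1 hu
      rw [map_smul, hv]
  have e1 := hproj.trace
  rw [finrank_span_singleton h0, htr, AddChar.sum_eq_zero_iff_ne_zero.2 hψ] at e1
  have e2 := htr 1
  rw [hP1, map_zero] at e2
  simp only [AddChar.one_apply, Finset.sum_const, Finset.card_univ, nsmul_eq_mul, mul_one] at e2
  have hq := card_ne (F := F)
  have e3 : ((Module.finrank ℂ V : ℂ) - τ) = Fintype.card F := by
    field_simp at e1; simpa using e1
  rw [e3] at e2
  have e4 : τ = -1 := by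
    have : τ + 1 = 0 := by
      field_simp at e2
      exact e2.symm
    linear_combination this
  rw [e4] at e3
  have e5 : ((Module.finrank ℂ V + 1 : ℕ) : ℂ) = (Fintype.card F : ℕ) := by
    push_cast; linear_combination e3
  exact_mod_cast e5

end form
end rep

theorem exists_j (F : Type*) [Field F] [Fintype F] :
    ∃ j : SpecialLinearGroup (Fin 2) F, j * j = -1 ∧ w * j = -1 * (j * w) := by
  obtain ⟨p, hp⟩ := CharP.exists F
  have hp' : NeZero p := ⟨CharP.char_ne_zero_of_finite F p⟩
  obtain ⟨a, b, hab⟩ := CharP.sq_add_sq F p (-1)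
  have hab' : (a : F) ^ 2 + (b : F) ^ 2 = -1 := by simpa using hab
  obtain ⟨j, h00, h01, h10, h11⟩ : ∃ j : SpecialLinearGroup (Fin 2) F,
      j 0 0 = a ∧ j 0 1 = b ∧ j 1 0 = b ∧ j 1 1 = -(a : F) :=
    ⟨⟨!![(a : F), b; b, -a], by rw [Matrix.det_fin_two_of]; linear_combination -hab'⟩,
      rfl, rfl, rfl, rfl⟩
  refine ⟨j, ?_, ?_⟩
  · apply ext2
    · rw [mul00, h00, h01, h10, neg00]; linear_combination hab'
    · rw [mul01, h00, h01, h11, neg01]; ring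
    · rw [mul10, h00, h10, h11, neg10]; ring
    · rw [mul11, h01, h10, h11, neg11]; linear_combination hab'
  · apply ext2
    · rw [mul00, mul00 (-1), mul00, mul10]; simp [h00, h01, h10, h11]
    · rw [mul01, mul01 (-1), mul01, mul11]; simp [h00, h01, h10, h11]
    · rw [mul10, mul10 (-1), mul00, mul10]; simp [h00, h01, h10, h11]
    · rw [mul11, mul11 (-1), mul01, mul11]; simp [h00, h01, h10, h11]

end Gow

theorem gow_orthogonal_central_character
    {F : Type*} [Field F] [Fintype F] (hq : Odd (Fintype.card F))
    {V : Type*} [AddCommGroup V] [Module ℂ V] [FiniteDimensional ℂ V] [Nontrivial V]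
    (π : Representation ℂ (SpecialLinearGroup (Fin 2) F) V)
    (hirr : ∀ W : Submodule ℂ V, (∀ g, ∀ v ∈ W, π g v ∈ W) → W = ⊥ ∨ W = ⊤)
    (B : V →ₗ[ℂ] V →ₗ[ℂ] ℂ)
    (hsymm : ∀ v w, B v w = B w v)
    (hinv : ∀ (g : SpecialLinearGroup (Fin 2) F) (v w : V), B (π g v) (π g w) = B v w)
    (hnondeg : ∀ v : V, (∀ w : V, B v w = 0) → v = 0) :
    (∀ v : V, π (-1) v = v) ∧
    LinearMap.trace ℂ V (π (-1)) = LinearMap.trace ℂ V (π 1) := by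
  suffices h : ∀ v : V, π (-1) v = v by
    refine ⟨h, ?_⟩
    have : π (-1) = π 1 := by
      rw [map_one]; exact LinearMap.ext h
    rw [this]
  have hz : ∀ v, π (-1) (π (-1) v) = v := fun v => by
    rw [← Module.End.mul_apply, ← map_mul]; simp
  rcases hirr (LinearMap.ker (π (-1) - 1)) (by
    intro g v hv
    rw [LinearMap.mem_ker, LinearMap.sub_apply, sub_eq_zero] at hv ⊢
    have hc : (-1 : SpecialLinearGroup (Fin 2) F) * g = g * -1 := by simp
    rw [← Module.End.mul_apply, ← map_mul, hc, map_mul, Module.End.mul_apply, hv]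
    rfl) with hbot | htop
  swap
  · intro v
    have : v ∈ LinearMap.ker (π (-1) - 1) := by rw [htop]; trivial
    rw [LinearMap.mem_ker, LinearMap.sub_apply, sub_eq_zero] at this
    exact this
  exfalso
  have hneg : ∀ v, π (-1) v = -v := by
    intro v
    have : π (-1) v + v ∈ LinearMap.ker (π (-1) - 1) := by
      rw [LinearMap.mem_ker, LinearMap.sub_apply, sub_eq_zero, map_add, hz, add_comm]
      rfl
    rw [hbot, Submodule.mem_bot] at this
    exact eq_neg_of_add_eq_zero_left this
  have hcusp := Gow.cusp π B hirr hinv hsymm hneg hnondeg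
  obtain ⟨ψ, hψ, v, h0, hv⟩ := Gow.exists_psi π hcusp
  by_cases hsq : IsSquare (-1 : F)
  · obtain ⟨i, hi⟩ := hsq
    have hi0 : i ≠ 0 := by rintro rfl; simp at hi
    exact Gow.case_one π B hirr hinv hsymm hneg hnondeg ψ hψ v h0 hv (Units.mk0 i hi0) hi.symm
  · have hd := Gow.finrank_eq π B hirr hinv hnondeg hcusp hsq ψ hψ v h0 hv
    rw [FiniteField.isSquare_neg_one_iff, not_not] at hsq
    obtain ⟨j, hj, hwj⟩ := Gow.exists_j F
    have h4 := Gow.four_dvd_finrank B hsymm hnondeg (π Gow.w) (π j)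
      (fun v => by rw [← Module.End.mul_apply, ← map_mul, Gow.w_w, hneg])
      (fun v => by rw [← Module.End.mul_apply, ← map_mul, hj, hneg])
      (fun v => by
        rw [← Module.End.mul_apply, ← map_mul, hwj, map_mul, Module.End.mul_apply, hneg, map_mul,
          Module.End.mul_apply])
      (hinv _) (hinv _)
    omega
end

section
/- (Gow) For q odd, if π is an irreducible complex representation of SL(2, F_q) admitting a nondegenerate invariant antisymmetric (symplectic) bilinear form, then ω_π(-I) = -1, i.e., Θ_π(-I) = -Θ_π(I). -/
open Matrix

set_option linter.unusedSectionVars false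

section abstractPart
variable {G : Type*} [Group G] [Fintype G] {V : Type*} [AddCommGroup V] [Module ℂ V]
  [FiniteDimensional ℂ V]

lemma gow_schur [Nontrivial V] (π : Representation ℂ G V)
    (hirr : ∀ W : Submodule ℂ V, (∀ g, ∀ v ∈ W, π g v ∈ W) → W = ⊥ ∨ W = ⊤)
    (S : V →ₗ[ℂ] V) (hS : ∀ g v, S (π g v) = π g (S v)) : ∃ s : ℂ, ∀ v, S v = s • v := by
  obtain ⟨s, hs⟩ := Module.End.exists_eigenvalue S
  refine ⟨s, fun v => ?_⟩
  rcases hirr (Module.End.eigenspace S s) (fun g v hv => by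
    rw [Module.End.mem_eigenspace_iff] at *
    rw [hS, hv, map_smul]) with h | h
  · exact absurd h hs
  · have : v ∈ Module.End.eigenspace S s := h ▸ Submodule.mem_top
    exact Module.End.mem_eigenspace_iff.1 this

lemma gow_S1 [Nontrivial V] (π : Representation ℂ G V)
    (hirr : ∀ W : Submodule ℂ V, (∀ g, ∀ v ∈ W, π g v ∈ W) → W = ⊥ ∨ W = ⊤)
    (f : V →ₗ[ℂ] ℂ) (v w : V) :
    (Module.finrank ℂ V : ℂ) • ∑ g, f (π g⁻¹ w) • π g v = ((Fintype.card G : ℂ) * f v) • w := by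
  let S : V →ₗ[ℂ] V := ∑ g : G, (f ∘ₗ π g⁻¹).smulRight (π g v)
  have hSa : ∀ w, S w = ∑ g, f (π g⁻¹ w) • π g v := fun w => by simp [S]
  obtain ⟨s, hs⟩ := gow_schur π hirr S (fun h w => by
    rw [hSa, hSa, map_sum]
    refine Fintype.sum_equiv (Equiv.mulLeft h⁻¹) _ _ (fun g => ?_)
    simp only [Equiv.coe_mulLeft, map_smul, ← Module.End.mul_apply, ← map_mul]
    simp)
  have ht : LinearMap.trace ℂ V S = Fintype.card G * f v := by
    simp only [S, map_sum, LinearMap.trace_smulRight]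
    simp [← Module.End.mul_apply, ← map_mul]
  have ht2 : S = s • LinearMap.id := by ext w; simp [hs]
  have h3 : s * Module.finrank ℂ V = Fintype.card G * f v := by
    rw [← ht, ht2]; simp
  rw [← hSa, hs, smul_smul, mul_comm, h3]

lemma gow_trace_sum (A : V →ₗ[ℂ] V) : LinearMap.trace ℂ V A =
    ∑ i, (Module.finBasis ℂ V).coord i (A (Module.finBasis ℂ V i)) := by
  rw [LinearMap.trace_eq_matrix_trace ℂ (Module.finBasis ℂ V)]
  simp [Matrix.trace, LinearMap.toMatrix_apply]

lemma gow_S2 [Nontrivial V] (π : Representation ℂ G V)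
    (hirr : ∀ W : Submodule ℂ V, (∀ g, ∀ v ∈ W, π g v ∈ W) → W = ⊥ ∨ W = ⊤)
    (A : V →ₗ[ℂ] V) (f : V →ₗ[ℂ] ℂ) (w : V) :
    (Module.finrank ℂ V : ℂ) * ∑ g, LinearMap.trace ℂ V (A * π g) * f (π g⁻¹ w)
      = (Fintype.card G : ℂ) * f (A w) := by
  have hA : A w = ∑ i, (Module.finBasis ℂ V).coord i (A w) • (Module.finBasis ℂ V i) := by
    simp
  calc _ = ∑ i, (Module.finBasis ℂ V).coord i (A ((Module.finrank ℂ V : ℂ) •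
          ∑ g, f (π g⁻¹ w) • π g (Module.finBasis ℂ V i))) := by
        simp only [gow_trace_sum, Finset.sum_mul, map_smul, map_sum, smul_eq_mul, ← Finset.mul_sum]
        congr 1
        rw [Finset.sum_comm]
        refine Finset.sum_congr rfl fun i _ => Finset.sum_congr rfl fun g _ => ?_
        rw [mul_comm]; rfl
    _ = _ := by
        conv_rhs => rw [hA]
        simp only [gow_S1 π hirr, map_smul, map_sum, smul_eq_mul, Finset.mul_sum]
        refine Finset.sum_congr rfl fun i _ => ?_
        ring

lemma gow_zero [Nontrivial V] (π : Representation ℂ G V)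
    (hirr : ∀ W : Submodule ℂ V, (∀ g, ∀ v ∈ W, π g v ∈ W) → W = ⊥ ∨ W = ⊤)
    (A : V →ₗ[ℂ] V) (h : ∀ g, LinearMap.trace ℂ V (A * π g) = 0) : A = 0 := by
  ext w
  rw [LinearMap.zero_apply, ← Module.forall_dual_apply_eq_zero_iff ℂ]
  intro f
  have := gow_S2 π hirr A f w
  simp only [h, zero_mul, Finset.sum_const_zero, mul_zero] at this
  have hc : (Fintype.card G : ℂ) ≠ 0 := Nat.cast_ne_zero.2 Fintype.card_ne_zero
  simpa [hc] using this.symm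

lemma gow_char_inv (π : Representation ℂ G V) (B : V →ₗ[ℂ] V →ₗ[ℂ] ℂ)
    (hinv : ∀ (g : G) (v w : V), B (π g v) (π g w) = B v w)
    (hnondeg : ∀ v : V, (∀ w : V, B v w = 0) → v = 0) (g : G) :
    LinearMap.trace ℂ V (π g⁻¹) = LinearMap.trace ℂ V (π g) := by
  have hinj : Function.Injective B := by
    rw [← LinearMap.ker_eq_bot, LinearMap.ker_eq_bot']
    intro v hv
    exact hnondeg v (fun w => by rw [hv]; rfl)
  let e : V ≃ₗ[ℂ] Module.Dual ℂ V :=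
    LinearEquiv.ofInjectiveOfFinrankEq B hinj (Subspace.dual_finrank_eq).symm
  have he : ∀ v w, e v w = B v w := fun v w => rfl
  rw [← LinearMap.trace_conj' (π g) e, ← LinearMap.trace_transpose' (π g⁻¹)]
  congr 1
  ext φ w
  obtain ⟨v, rfl⟩ := e.surjective φ
  simp only [LinearEquiv.conj_apply_apply, LinearEquiv.symm_apply_apply, Module.Dual.transpose_apply,
    LinearMap.comp_apply, he]
  rw [← hinv g v]
  simp [← Module.End.mul_apply, ← map_mul]

lemma gow_form [Nontrivial V] (π : Representation ℂ G V)
    (hirr : ∀ W : Submodule ℂ V, (∀ g, ∀ v ∈ W, π g v ∈ W) → W = ⊥ ∨ W = ⊤)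
    (B : V →ₗ[ℂ] V →ₗ[ℂ] ℂ) (halt : ∀ v : V, B v v = 0)
    (hinv : ∀ (g : G) (v w : V), B (π g v) (π g w) = B v w)
    (hnondeg : ∀ v : V, (∀ w : V, B v w = 0) → v = 0)
    (α : G →* G) (hα : ∀ g, α (α g) = g)
    (H1 : ∀ g, ∃ y, y * g * y⁻¹ = α g⁻¹)
    (H2 : ∀ g, ∃ y, π (α y * g * y⁻¹) = π g⁻¹) :
    ∃ B' : V →ₗ[ℂ] V →ₗ[ℂ] ℂ, (∀ v, B' v v = 0) ∧
      (∀ g v w, B' (π g v) w = B' v (π (α g⁻¹) w)) ∧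
      (∀ v, (∀ w, B' v w = 0) → v = 0) := by
  have hskew : ∀ v w, B v w = - B w v := fun v w => by
    have := halt (v + w)
    simp only [map_add, LinearMap.add_apply, halt, zero_add, add_zero] at this
    linear_combination this
  have hadj : ∀ g v w, B (π g v) w = B v (π g⁻¹ w) := fun g v w => by
    rw [← hinv g v]; simp [← Module.End.mul_apply, ← map_mul]
  have hadj' : ∀ g v w, B v (π g w) = B (π g⁻¹ v) w := fun g v w => by
    rw [hadj, inv_inv]
  have hchi : ∀ g, LinearMap.trace ℂ V (π (α g)) = LinearMap.trace ℂ V (π g) := fun g => by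
    rw [← gow_char_inv π B hinv hnondeg (α g), ← map_inv]
    obtain ⟨y, hy⟩ := H1 g
    rw [← hy, map_mul, LinearMap.trace_mul_comm, ← map_mul]
    simp
  let T : V → V → V →ₗ[ℂ] V := fun v u => ∑ g : G, (B u ∘ₗ π g⁻¹).smulRight (π (α g) v)
  have hT : ∀ v u w, T v u w = ∑ g, B u (π g⁻¹ w) • π (α g) v := fun v u w => by simp [T]
  -- intertwining
  have hTi : ∀ v u h w, T v u (π h w) = π (α h) (T v u w) := fun v u h w => by
    rw [hT, hT, map_sum]
    refine Fintype.sum_equiv (Equiv.mulLeft h⁻¹) _ _ (fun g => ?_)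
    simp only [Equiv.coe_mulLeft, map_smul, ← Module.End.mul_apply, ← map_mul]
    simp
  -- traces
  have hTt : ∀ v u h, LinearMap.trace ℂ V (T v u * π h) = ∑ g, B u (π (g⁻¹ * h * α g) v) := by
    intro v u h
    have : T v u * π h = ∑ g : G, (B u ∘ₗ π (g⁻¹ * h)).smulRight (π (α g) v) := by
      ext w
      simp [Module.End.mul_apply, hT]
    rw [this, map_sum]
    simp only [LinearMap.trace_smulRight]
    simp [Module.End.mul_apply]
  have hTs : ∀ v u, T v u + T u v = 0 := by
    intro v u
    apply gow_zero π hirr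
    intro h
    rw [add_mul, map_add, hTt, hTt]
    obtain ⟨y, hy⟩ := H2 h
    have : ∑ g, B u (π (g⁻¹ * h * α g) v) = ∑ g, B (π (g⁻¹ * h * α g) u) v := by
      symm
      refine Fintype.sum_equiv (⟨fun m => y * α m, fun g => α (y⁻¹ * g), fun m => by simp [hα],
        fun g => by simp [hα]⟩ : G ≃ G) _ _ (fun m => ?_)
      simp only [Equiv.coe_fn_mk]
      rw [hadj' _ u v]
      have e1 : ((y * α m)⁻¹ * h * α (y * α m))⁻¹ = (m⁻¹ * α y⁻¹) * h⁻¹ * (y * α m) := by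
        simp [hα, mul_assoc]
      rw [e1, map_mul π (m⁻¹ * α y⁻¹ * h⁻¹), map_mul π (m⁻¹ * α y⁻¹), ← hy, ← map_mul, ← map_mul]
      congr 3
      simp [mul_assoc]
    rw [this, ← Finset.sum_add_distrib]
    exact Finset.sum_eq_zero fun g _ => by rw [hskew]; ring
  have hTadj : ∀ v u w x, B (T v u w) x = B w (T v u x) := by
    intro v u w x
    have h1 : B w (T v u x) = - B (T u v w) x := by
      simp only [hT, map_sum, map_smul, LinearMap.sum_apply, LinearMap.smul_apply, smul_eq_mul]
      rw [← Finset.sum_neg_distrib]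
      refine Fintype.sum_equiv (⟨fun m => α m, fun m => α m, hα, hα⟩ : G ≃ G) _ _ (fun g => ?_)
      simp only [Equiv.coe_fn_mk, hα]
      rw [hadj' (α g) w v, hadj' g⁻¹ u x, hskew v, inv_inv]
      ring
    have h2 : T v u = - T u v := eq_neg_of_add_eq_zero_left (hTs v u)
    rw [h1, h2]; simp
  -- nonvanishing
  have hTne : ∃ v u, T v u ≠ 0 := by
    by_contra! hz
    obtain ⟨u, hu⟩ := exists_ne (0 : V)
    refine hu (hnondeg u fun w => ?_)
    have h1 := gow_S2 π hirr 1 (B u) w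
    have h2 : ∑ g, LinearMap.trace ℂ V (1 * π g) * (B u) (π g⁻¹ w) = 0 := by
      have : ∀ g, LinearMap.trace ℂ V (1 * π g) = LinearMap.trace ℂ V (π (α g)) := fun g => by
        rw [hchi, one_mul]
      simp only [this, gow_trace_sum, Finset.sum_mul]
      rw [Finset.sum_comm]
      refine Finset.sum_eq_zero fun i _ => ?_
      have h3 := congrArg ((Module.finBasis ℂ V).coord i)
        (hT (Module.finBasis ℂ V i) u w)
      rw [hz] at h3
      simp only [map_sum, map_smul, smul_eq_mul] at h3
      rw [LinearMap.zero_apply, map_zero] at h3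
      rw [h3]
      exact Finset.sum_congr rfl fun g _ => mul_comm _ _
    rw [h2, mul_zero] at h1
    have hc : (Fintype.card G : ℂ) ≠ 0 := Nat.cast_ne_zero.2 Fintype.card_ne_zero
    simpa [hc] using h1.symm
  obtain ⟨v₀, u₀, hne⟩ := hTne
  generalize hS : T v₀ u₀ = S at hne
  have hSi : ∀ h w, S (π h w) = π (α h) (S w) := hS ▸ hTi v₀ u₀
  have hSadj : ∀ w x, B (S w) x = B w (S x) := hS ▸ hTadj v₀ u₀
  have hker : LinearMap.ker S = ⊥ := by
    refine (hirr (LinearMap.ker S) fun g v hv => ?_).resolve_right fun h => hne ?_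
    · rw [LinearMap.mem_ker] at *
      rw [hSi, hv, map_zero]
    · exact LinearMap.ker_eq_top.1 h
  refine ⟨B ∘ₗ S, fun v => ?_, fun g v w => ?_, fun v hv => ?_⟩
  · have h1 := hskew (S v) v
    rw [← hSadj] at h1
    simp only [LinearMap.comp_apply]
    linear_combination h1 / 2
  · simp only [LinearMap.comp_apply]
    rw [hSi, hadj, map_inv α]
  · exact LinearMap.ker_eq_bot'.1 hker v (hnondeg _ hv)
end abstractPart

section SL2
variable {F : Type*} [Field F]

def gowU (x : F) : SpecialLinearGroup (Fin 2) F := ⟨!![1, x; 0, 1], by simp⟩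
def gowL (x : F) : SpecialLinearGroup (Fin 2) F := ⟨!![1, 0; x, 1], by simp⟩
def gowW : SpecialLinearGroup (Fin 2) F := ⟨!![0, 1; -1, 0], by simp⟩

lemma gow_det (g : SpecialLinearGroup (Fin 2) F) : g 0 0 * g 1 1 - g 0 1 * g 1 0 = 1 := by
  rw [← Matrix.det_fin_two]; exact g.2

lemma gow_ext {g h : SpecialLinearGroup (Fin 2) F} (h1 : g 0 0 = h 0 0) (h2 : g 0 1 = h 0 1)
    (h3 : g 1 0 = h 1 0) (h4 : g 1 1 = h 1 1) : g = h := by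
  ext i j
  fin_cases i <;> fin_cases j <;> simpa

lemma gow_mul00 (g h : SpecialLinearGroup (Fin 2) F) (i j : Fin 2) :
    (g * h) i j = g i 0 * h 0 j + g i 1 * h 1 j := by
  simp [Matrix.mul_apply, Fin.sum_univ_two]

def gowα0 (g : SpecialLinearGroup (Fin 2) F) : SpecialLinearGroup (Fin 2) F :=
  ⟨!![g 0 0, - g 0 1; - g 1 0, g 1 1], by
    rw [Matrix.det_fin_two_of]; linear_combination gow_det g⟩

lemma gowα000 (g : SpecialLinearGroup (Fin 2) F) : gowα0 g 0 0 = g 0 0 := rfl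
lemma gowα001 (g : SpecialLinearGroup (Fin 2) F) : gowα0 g 0 1 = - g 0 1 := rfl
lemma gowα010 (g : SpecialLinearGroup (Fin 2) F) : gowα0 g 1 0 = - g 1 0 := rfl
lemma gowα011 (g : SpecialLinearGroup (Fin 2) F) : gowα0 g 1 1 = g 1 1 := rfl

def gowα : SpecialLinearGroup (Fin 2) F →* SpecialLinearGroup (Fin 2) F where
  toFun := gowα0
  map_one' := by
    apply gow_ext <;> simp [gowα000, gowα001, gowα010, gowα011]
  map_mul' g h := by
    apply gow_ext <;> simp only [gow_mul00, gowα000, gowα001, gowα010, gowα011] <;> ring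

lemma gow_inv00 (g : SpecialLinearGroup (Fin 2) F) : g⁻¹ 0 0 = g 1 1 := by
  simp [Matrix.adjugate_fin_two]
lemma gow_inv01 (g : SpecialLinearGroup (Fin 2) F) : g⁻¹ 0 1 = - g 0 1 := by
  simp [Matrix.adjugate_fin_two]
lemma gow_inv10 (g : SpecialLinearGroup (Fin 2) F) : g⁻¹ 1 0 = - g 1 0 := by
  simp [Matrix.adjugate_fin_two]
lemma gow_inv11 (g : SpecialLinearGroup (Fin 2) F) : g⁻¹ 1 1 = g 0 0 := by
  simp [Matrix.adjugate_fin_two]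
lemma gow_neg (g : SpecialLinearGroup (Fin 2) F) (i j : Fin 2) : (-g) i j = - g i j := by
  simp
lemma gowα00 (g : SpecialLinearGroup (Fin 2) F) : gowα g 0 0 = g 0 0 := rfl
lemma gowα01 (g : SpecialLinearGroup (Fin 2) F) : gowα g 0 1 = - g 0 1 := rfl
lemma gowα10 (g : SpecialLinearGroup (Fin 2) F) : gowα g 1 0 = - g 1 0 := rfl
lemma gowα11 (g : SpecialLinearGroup (Fin 2) F) : gowα g 1 1 = g 1 1 := rfl
lemma gowU00 (x : F) : gowU x 0 0 = 1 := rfl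
lemma gowU01 (x : F) : gowU x 0 1 = x := rfl
lemma gowU10 (x : F) : gowU x 1 0 = 0 := rfl
lemma gowU11 (x : F) : gowU x 1 1 = 1 := rfl
lemma gowL00 (x : F) : gowL x 0 0 = 1 := rfl
lemma gowL01 (x : F) : gowL x 0 1 = 0 := rfl
lemma gowL10 (x : F) : gowL x 1 0 = x := rfl
lemma gowL11 (x : F) : gowL x 1 1 = 1 := rfl
lemma gowW00 : (gowW : SpecialLinearGroup (Fin 2) F) 0 0 = 0 := rfl
lemma gowW01 : (gowW : SpecialLinearGroup (Fin 2) F) 0 1 = 1 := rfl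
lemma gowW10 : (gowW : SpecialLinearGroup (Fin 2) F) 1 0 = -1 := rfl
lemma gowW11 : (gowW : SpecialLinearGroup (Fin 2) F) 1 1 = 0 := rfl

lemma gowα_invol (g : SpecialLinearGroup (Fin 2) F) : gowα (gowα g) = g := by
  apply gow_ext <;> simp only [gowα00, gowα01, gowα10, gowα11, neg_neg]

lemma gowU_conj (g : SpecialLinearGroup (Fin 2) F) (hc : g 1 0 ≠ 0) :
    gowU ((g 1 1 - g 0 0) / g 1 0) * g * (gowU ((g 1 1 - g 0 0) / g 1 0))⁻¹ = gowα g⁻¹ := by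
  rw [mul_inv_eq_iff_eq_mul]
  apply gow_ext <;> simp only [gow_mul00, gow_inv00, gow_inv01, gow_inv10, gow_inv11, gowα00,
    gowα01, gowα10, gowα11, gowU00, gowU01, gowU10, gowU11] <;> field_simp <;> ring

lemma gow_H1 (g : SpecialLinearGroup (Fin 2) F) : ∃ y, y * g * y⁻¹ = gowα g⁻¹ := by
  by_cases hc : g 1 0 = 0
  · by_cases hb : g 0 1 = 0
    · refine ⟨gowW, ?_⟩
      rw [mul_inv_eq_iff_eq_mul]
      apply gow_ext <;> simp only [gow_mul00, gow_inv00, gow_inv01, gow_inv10, gow_inv11, gowα00,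
        gowα01, gowα10, gowα11, gowW00, gowW01, gowW10, gowW11, hb, hc] <;> ring
    · refine ⟨gowL ((g 0 0 - g 1 1) / g 0 1), ?_⟩
      rw [mul_inv_eq_iff_eq_mul]
      apply gow_ext <;> simp only [gow_mul00, gow_inv00, gow_inv01, gow_inv10, gow_inv11, gowα00,
        gowα01, gowα10, gowα11, gowL00, gowL01, gowL10, gowL11] <;> field_simp <;> ring
  · exact ⟨_, gowU_conj g hc⟩

lemma gow_H2 (g : SpecialLinearGroup (Fin 2) F) : ∃ y, gowα y * g * y⁻¹ = -g⁻¹ := by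
  by_cases hc : g 1 0 = 0
  · by_cases hb : g 0 1 = 0
    · refine ⟨gowW, ?_⟩
      rw [mul_inv_eq_iff_eq_mul]
      apply gow_ext <;> simp only [gow_mul00, gow_neg, gow_inv00, gow_inv01, gow_inv10, gow_inv11,
        gowα00, gowα01, gowα10, gowα11, gowW00, gowW01, gowW10, gowW11, hb, hc] <;> ring
    · refine ⟨gowL ((g 0 0 + g 1 1) / g 0 1), ?_⟩
      rw [mul_inv_eq_iff_eq_mul]
      apply gow_ext <;> simp only [gow_mul00, gow_neg, gow_inv00, gow_inv01, gow_inv10, gow_inv11,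
        gowα00, gowα01, gowα10, gowα11, gowL00, gowL01, gowL10, gowL11] <;> field_simp <;> ring
  · refine ⟨gowU ((g 0 0 + g 1 1) / g 1 0), ?_⟩
    rw [mul_inv_eq_iff_eq_mul]
    apply gow_ext <;> simp only [gow_mul00, gow_neg, gow_inv00, gow_inv01, gow_inv10, gow_inv11,
        gowα00, gowα01, gowα10, gowα11, gowU00, gowU01, gowU10, gowU11] <;> field_simp <;> ring

lemma gowU_mul (x y : F) : gowU x * gowU y = gowU (x + y) := by
  apply gow_ext <;> simp only [gow_mul00, gowU00, gowU01, gowU10, gowU11] <;> ring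

lemma gowU_zero : gowU (0 : F) = 1 := by
  ext i j
  fin_cases i <;> fin_cases j <;> simp [gowU]

lemma gowU_inv (x : F) : (gowU x)⁻¹ = gowU (-x) := by
  rw [inv_eq_iff_mul_eq_one, gowU_mul, add_neg_cancel, gowU_zero]

lemma gowα_U_inv (x : F) : gowα (gowU x)⁻¹ = gowU x := by
  rw [gowU_inv]
  apply gow_ext <;> simp only [gowα00, gowα01, gowα10, gowα11, gowU00, gowU01, gowU10, gowU11,
    neg_neg, neg_zero]

lemma gow_kerU (N : Subgroup (SpecialLinearGroup (Fin 2) F)) [N.Normal] (hU : ∀ x, gowU x ∈ N)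
    (g : SpecialLinearGroup (Fin 2) F) : g ∈ N := by
  have hL : ∀ x, gowL x ∈ N := fun x => by
    have h1 : gowL x = gowW * gowU (-x) * gowW⁻¹ := by
      symm
      rw [mul_inv_eq_iff_eq_mul]
      apply gow_ext <;> simp only [gow_mul00, gowU00, gowU01, gowU10, gowU11, gowL00, gowL01,
        gowL10, gowL11, gowW00, gowW01, gowW10, gowW11] <;> ring
    rw [h1]
    exact Subgroup.Normal.conj_mem inferInstance _ (hU _) _
  have key : ∀ g : SpecialLinearGroup (Fin 2) F, g 1 0 ≠ 0 → g ∈ N := fun g hc => by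
    have h1 : g = gowU ((g 0 0 - 1) / g 1 0) * gowL (g 1 0) * gowU ((g 1 1 - 1) / g 1 0) := by
      have := gow_det g
      apply gow_ext <;> simp only [gow_mul00, gowU00, gowU01, gowU10, gowU11, gowL00, gowL01,
        gowL10, gowL11] <;> field_simp
      · ring
      · linear_combination -this
      · ring
      · ring
    rw [h1]
    exact N.mul_mem (N.mul_mem (hU _) (hL _)) (hU _)
  by_cases hc : g 1 0 = 0
  · have h2 : gowL 1 * g ∈ N := key _ (by
      have := gow_det g
      simp only [gow_mul00, gowL10, gowL11, hc]
      intro h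
      simp only [one_mul, add_zero, mul_zero] at h
      simp [h, hc] at this)
    exact (N.mul_mem_cancel_left (hL 1)).1 h2
  · exact key g hc

lemma gow_diag_conj (g : SpecialLinearGroup (Fin 2) F) (hc : g 1 0 = 0) (x : F) :
    g * gowU (g 1 1 ^ 2 * x) = gowU x * g := by
  have := gow_det g
  rw [hc, mul_zero, sub_zero] at this
  apply gow_ext <;> simp only [gow_mul00, gowU00, gowU01, gowU10, gowU11, hc]
  · ring
  · linear_combination g 1 1 * x * this
  · ring
  · ring

variable {V : Type*} [AddCommGroup V] [Module ℂ V]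

noncomputable def gowE [Fintype F] (π : Representation ℂ (SpecialLinearGroup (Fin 2) F) V)
    (ψ : AddChar F ℂ) : V →ₗ[ℂ] V := ∑ x : F, ψ (-x) • π (gowU x)

lemma gowE_mul [Fintype F] (π : Representation ℂ (SpecialLinearGroup (Fin 2) F) V)
    (ψ : AddChar F ℂ) (r : F) (v : V) : gowE π ψ (π (gowU r) v) = ψ r • gowE π ψ v := by
  simp only [gowE, LinearMap.sum_apply, LinearMap.smul_apply, Finset.smul_sum, smul_smul]
  refine Fintype.sum_equiv (Equiv.addRight r) _ _ fun x => ?_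
  rw [← Module.End.mul_apply, ← map_mul, gowU_mul, ← AddChar.map_add_eq_mul]
  simp

lemma gowE_mul' [Fintype F] (π : Representation ℂ (SpecialLinearGroup (Fin 2) F) V)
    (ψ : AddChar F ℂ) (r : F) (v : V) : π (gowU r) (gowE π ψ v) = ψ r • gowE π ψ v := by
  rw [← gowE_mul]
  simp only [gowE, LinearMap.sum_apply, LinearMap.smul_apply, map_sum, map_smul]
  refine Finset.sum_congr rfl fun x _ => ?_
  rw [← Module.End.mul_apply, ← Module.End.mul_apply, ← map_mul, ← map_mul, gowU_mul, gowU_mul,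
    add_comm]

lemma gowE_double [Fintype F] (π : Representation ℂ (SpecialLinearGroup (Fin 2) F) V)
    (ψ : AddChar F ℂ) (hψ : ψ ≠ 1) (g : SpecialLinearGroup (Fin 2) F) (v : V) :
    gowE π ψ (π (gowα g⁻¹) (gowE π ψ v)) = gowE π ψ (π g (gowE π ψ v)) := by
  by_cases hc : g 1 0 = 0
  · have hdet := gow_det g
    rw [hc, mul_zero, sub_zero] at hdet
    by_cases hd : g 1 1 ^ 2 = 1
    · have h1 : g 0 0 = g 1 1 := by linear_combination g 1 1 * hdet - g 0 0 * hd
      have : gowα g⁻¹ = g := by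
        apply gow_ext <;> simp only [gow_inv00, gow_inv01, gow_inv10, gow_inv11, gowα00,
          gowα01, gowα10, gowα11, h1, neg_neg]
      rw [this]
    · have hz : ∀ h : SpecialLinearGroup (Fin 2) F, h 1 0 = 0 → h 1 1 ^ 2 ≠ 1 →
          gowE π ψ (π h (gowE π ψ v)) = 0 := by
        intro h hc hd
        obtain ⟨x, hx⟩ := AddChar.ne_one_iff.1 hψ
        set k := h 1 1 ^ 2 with hk
        have hk1 : k - 1 ≠ 0 := sub_ne_zero.2 hd
        have h1 : ∀ x, (ψ (k * x) - ψ x) • gowE π ψ (π h (gowE π ψ v)) = 0 := fun x => by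
          have a1 : gowE π ψ (π (gowU x) (π h (gowE π ψ v))) = ψ x • gowE π ψ (π h (gowE π ψ v)) :=
            gowE_mul π ψ x _
          have a2 : gowE π ψ (π h (π (gowU (k * x)) (gowE π ψ v)))
              = ψ (k * x) • gowE π ψ (π h (gowE π ψ v)) := by
            rw [gowE_mul', map_smul, map_smul]
          have a3 : π h (π (gowU (k * x)) (gowE π ψ v)) = π (gowU x) (π h (gowE π ψ v)) := by
            have := congrArg (fun y => π y (gowE π ψ v)) (gow_diag_conj h hc x)
            simpa only [map_mul, Module.End.mul_apply] using this
          rw [sub_smul, ← a1, ← a2, a3, sub_self]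
        refine (smul_eq_zero.1 (h1 (x / (k - 1)))).resolve_left fun h0 => hx ?_
        have h2 : k * (x / (k - 1)) = x + x / (k - 1) := by field_simp; ring
        rw [h2, AddChar.map_add_eq_mul] at h0
        have h3 : ψ (x / (k - 1)) ≠ 0 := (AddChar.val_isUnit ψ _).ne_zero
        have h4 : (ψ x - 1) * ψ (x / (k - 1)) = 0 := by linear_combination h0
        exact sub_eq_zero.1 ((mul_eq_zero.1 h4).resolve_right h3)
      rw [hz g hc hd, hz]
      · simp [gowα10, gow_inv10, hc]
      · rw [gowα11, gow_inv11]
        intro h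
        apply hd
        linear_combination (g 0 0 * g 1 1 + 1) * hdet - g 1 1 ^ 2 * h
  · rw [← gowU_conj g hc, gowU_inv, map_mul, map_mul, Module.End.mul_apply, Module.End.mul_apply,
      gowE_mul', gowE_mul, map_smul, map_smul, smul_smul, ← AddChar.map_add_eq_mul]
    simp

lemma gow_main [Fintype F] [Fintype (SpecialLinearGroup (Fin 2) F)]
    [FiniteDimensional ℂ V] [Nontrivial V]
    (π : Representation ℂ (SpecialLinearGroup (Fin 2) F) V)
    (hirr : ∀ W : Submodule ℂ V, (∀ g, ∀ v ∈ W, π g v ∈ W) → W = ⊥ ∨ W = ⊤)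
    (B : V →ₗ[ℂ] V →ₗ[ℂ] ℂ) (halt : ∀ v : V, B v v = 0)
    (hinv : ∀ (g : SpecialLinearGroup (Fin 2) F) (v w : V), B (π g v) (π g w) = B v w)
    (hnondeg : ∀ v : V, (∀ w : V, B v w = 0) → v = 0)
    (hone : π (-1) = 1) : False := by
  classical
  obtain ⟨B', halt', hadj, hnd⟩ := gow_form π hirr B halt hinv hnondeg gowα gowα_invol gow_H1
    (fun g => by
      obtain ⟨y, hy⟩ := gow_H2 g
      refine ⟨y, ?_⟩
      rw [hy, ← neg_one_mul, map_mul, hone, one_mul])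
  have hskew : ∀ v w, B' v w = - B' w v := fun v w => by
    have := halt' (v + w)
    simp only [map_add, LinearMap.add_apply, halt', zero_add, add_zero] at this
    linear_combination this
  have hE : ∀ ψ v w, B' (gowE π ψ v) w = B' v (gowE π ψ w) := fun ψ v w => by
    simp only [gowE, LinearMap.sum_apply, LinearMap.smul_apply, map_sum, map_smul, hadj, gowα_U_inv]
  have hE0 : ∀ ψ, ψ ≠ 1 → gowE π ψ = 0 := by
    intro ψ hψ
    have h1 : ∀ g p q, B' (gowE π ψ (π g (gowE π ψ p))) q = B' p (gowE π ψ (π g (gowE π ψ q))) := by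
      intro g p q
      rw [hE, hadj, hE, gowE_double π ψ hψ]
    have h2 : ∀ (A : V →ₗ[ℂ] V) p q, B' (gowE π ψ (A (gowE π ψ p))) q
        = B' p (gowE π ψ (A (gowE π ψ q))) := by
      intro A p q
      have e1 := gow_S2 π hirr A ((B'.flip q) ∘ₗ gowE π ψ) (gowE π ψ p)
      have e2 := gow_S2 π hirr A ((B' p) ∘ₗ gowE π ψ) (gowE π ψ q)
      simp only [LinearMap.comp_apply, LinearMap.flip_apply] at e1 e2
      simp only [h1] at e1
      have hc : (Fintype.card (SpecialLinearGroup (Fin 2) F) : ℂ) ≠ 0 :=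
        Nat.cast_ne_zero.2 Fintype.card_ne_zero
      exact mul_left_cancel₀ hc (e1.symm.trans e2)
    ext z
    rw [LinearMap.zero_apply]
    by_contra hz
    apply hz
    apply hnd
    intro q
    rw [← Module.forall_dual_apply_eq_zero_iff ℂ] at hz
    push Not at hz
    obtain ⟨φ, hφ⟩ := hz
    have h3 := h2 (φ.smulRight z) z q
    have h4 : B' z (gowE π ψ z) = 0 := by
      have := hskew z (gowE π ψ z)
      rw [hE] at this
      linear_combination this / 2
    simp only [LinearMap.smulRight_apply, map_smul, LinearMap.smul_apply, h4, smul_zero] at h3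
    exact (smul_eq_zero.1 h3).resolve_left hφ
  have hF : (Fintype.card F : ℂ) ≠ 0 := Nat.cast_ne_zero.2 Fintype.card_ne_zero
  have hU : ∀ y, (Fintype.card F : ℂ) • π (gowU y) = gowE π 1 := by
    intro y
    have h1 : ∑ ψ : AddChar F ℂ, ψ y • gowE π ψ = gowE π 1 := by
      rw [Finset.sum_eq_single 1]
      · simp
      · intro ψ _ h
        rw [hE0 ψ h, smul_zero]
      · simp
    rw [← h1]
    simp only [gowE, Finset.smul_sum, smul_smul, ← AddChar.map_add_eq_mul]
    rw [Finset.sum_comm]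
    simp only [← Finset.sum_smul, AddChar.sum_apply_eq_ite]
    simp [add_neg_eq_zero]
  have hU1 : ∀ y, π (gowU y) = 1 := fun y => by
    have h := (hU y).trans (hU 0).symm
    rw [gowU_zero, map_one] at h
    exact smul_right_injective _ hF h
  have hall : ∀ g, π g = 1 := gow_kerU (MonoidHom.ker π) hU1
  obtain ⟨v, hv⟩ := exists_ne (0 : V)
  rcases hirr (Submodule.span ℂ {v}) (fun g w hw => by rw [hall]; exact hw) with h | h
  · exact hv (by simpa using h)
  · refine hv (hnondeg v fun w => ?_)
    have hw : w ∈ Submodule.span ℂ {v} := h ▸ Submodule.mem_top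
    obtain ⟨k, rfl⟩ := Submodule.mem_span_singleton.1 hw
    rw [map_smul, halt, smul_zero]
end SL2

theorem gow_symplectic_central_character
    {F : Type*} [Field F] [Fintype F] (hq : Odd (Fintype.card F))
    {V : Type*} [AddCommGroup V] [Module ℂ V] [FiniteDimensional ℂ V] [Nontrivial V]
    (π : Representation ℂ (SpecialLinearGroup (Fin 2) F) V)
    (hirr : ∀ W : Submodule ℂ V, (∀ g, ∀ v ∈ W, π g v ∈ W) → W = ⊥ ∨ W = ⊤)
    (B : V →ₗ[ℂ] V →ₗ[ℂ] ℂ)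
    (halt : ∀ v : V, B v v = 0)
    (hinv : ∀ (g : SpecialLinearGroup (Fin 2) F) (v w : V), B (π g v) (π g w) = B v w)
    (hnondeg : ∀ v : V, (∀ w : V, B v w = 0) → v = 0) :
    (∀ v : V, π (-1) v = -v) ∧
    LinearMap.trace ℂ V (π (-1)) = -LinearMap.trace ℂ V (π 1) := by
  have hsq : ∀ v, π (-1) (π (-1) v) = v := fun v => by
    rw [← Module.End.mul_apply, ← map_mul]; simp
  have hcomm : ∀ g v, π (-1) (π g v) = π g (π (-1) v) := fun g v => by
    rw [← Module.End.mul_apply, ← Module.End.mul_apply, ← map_mul, ← map_mul]; simp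
  have hmain : ∀ v : V, π (-1) v = -v := by
    rcases hirr (LinearMap.ker (π (-1) - 1)) (fun g v hv => by
      simp only [LinearMap.mem_ker, LinearMap.sub_apply, Module.End.one_apply, sub_eq_zero] at *
      rw [hcomm, hv]) with h | h
    · intro v
      have h1 : π (-1) v + v ∈ LinearMap.ker (π (-1) - 1) := by
        simp [LinearMap.mem_ker, hsq, add_comm]
      rw [h, Submodule.mem_bot] at h1
      exact eq_neg_of_add_eq_zero_left h1
    · exfalso
      have : Fintype (SpecialLinearGroup (Fin 2) F) := Fintype.ofFinite _
      exact gow_main π hirr B halt hinv hnondeg (sub_eq_zero.1 (LinearMap.ker_eq_top.1 h))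
  refine ⟨hmain, ?_⟩
  have : π (-1) = - π 1 := by
    ext v
    simp [hmain]
  rw [this, map_neg]
end

section
/- For q even, every finite-dimensional complex representation of SL(2, F_q) admits a nondegenerate invariant symmetric bilinear form; equivalently, every complex representation of SL(2, F_q) is realizable over ℝ. -/
open Matrix

/-- Existence of an invariant nondegenerate symmetric form. -/
def HasOrthForm {G V : Type*} [Group G] [AddCommGroup V] [Module ℂ V]
    (π : Representation ℂ G V) : Prop :=
  ∃ B : V →ₗ[ℂ] V →ₗ[ℂ] ℂ,
      (∀ v w : V, B v w = B w v) ∧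
      (∀ (g : G) (v w : V), B (π g v) (π g w) = B v w) ∧
      (∀ v : V, (∀ w : V, B v w = 0) → v = 0)

/-- Gelfand-type trick: a vector `v` and functional `l` whose matrix coefficient is
symmetric under inversion gives an invariant symmetric form on an irreducible representation. -/
theorem hasOrthForm_of_coeff {G V : Type*} [Group G] [AddCommGroup V] [Module ℂ V]
    (π : Representation ℂ G V)
    (hirr : ∀ W : Subrepresentation π, W.toSubmodule = ⊥ ∨ W.toSubmodule = ⊤)
    (v : V) (l : V →ₗ[ℂ] ℂ) (hl : l v ≠ 0)
    (hs : ∀ g : G, l (π g v) = l (π g⁻¹ v)) : HasOrthForm π := by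
  have hv : v ≠ 0 := by rintro rfl; simp at hl
  have hspan : Submodule.span ℂ (Set.range fun g => π g v) = ⊤ := by
    let W : Subrepresentation π :=
      { toSubmodule := Submodule.span ℂ (Set.range fun g => π g v)
        apply_mem_toSubmodule := by
          intro g x hx
          induction hx using Submodule.span_induction with
          | mem x hx =>
            obtain ⟨h, rfl⟩ := hx
            refine Submodule.subset_span ⟨g * h, ?_⟩
            simp
          | zero => simp
          | add x y _ _ hx hy => rw [map_add]; exact Submodule.add_mem _ hx hy
          | smul a x _ hx => rw [map_smul]; exact Submodule.smul_mem _ _ hx }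
    rcases hirr W with h | h
    · exfalso
      apply hv
      have : v ∈ W.toSubmodule := Submodule.subset_span ⟨1, by simp⟩
      rw [h] at this
      simpa using this
    · exact h
  let S := Finsupp.linearCombination ℂ (fun g => π g v)
  have hS : LinearMap.range S = ⊤ := by
    rw [Finsupp.range_linearCombination, hspan]
  obtain ⟨s, hs'⟩ := LinearMap.exists_rightInverse_of_surjective S hS
  let D := Finsupp.linearCombination ℂ (fun g : G => l ∘ₗ π g⁻¹)
  have hD : ∀ (a : G →₀ ℂ) (g : G), D a (π g v) = l (π g⁻¹ (S a)) := by
    intro a g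
    induction a using Finsupp.induction_linear with
    | zero => simp
    | add a b ha hb => simp [ha, hb]
    | single h c =>
      have h1 := hs (h⁻¹ * g)
      simp only [map_mul, _root_.mul_inv_rev, inv_inv, Module.End.mul_apply] at h1
      simp [D, S, h1]
  let B : V →ₗ[ℂ] V →ₗ[ℂ] ℂ := D ∘ₗ s
  have hB : ∀ y g, B y (π g v) = l (π g⁻¹ y) := by
    intro y g
    have : S (s y) = y := LinearMap.congr_fun hs' y
    change D (s y) (π g v) = _
    rw [hD, this]
  have ext : ∀ f f' : V →ₗ[ℂ] ℂ, (∀ g, f (π g v) = f' (π g v)) → f = f' := by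
    intro f f' h
    refine LinearMap.ext_on_range (v := fun g => π g v) hspan h
  have hinv : ∀ (g : G) (v w : V), B (π g v) (π g w) = B v w := by
    intro g x y
    have : (B (π g x)) ∘ₗ π g = B x := by
      apply ext
      intro h
      rw [LinearMap.comp_apply, ← Module.End.mul_apply, ← map_mul, hB, hB,
        ← Module.End.mul_apply, ← map_mul]
      congr 3
      group
    exact LinearMap.congr_fun this y
  refine ⟨B, ?_, hinv, ?_⟩
  · intro x y
    have h1 : ∀ g, B (π g v) = B.flip (π g v) := by
      intro g
      apply ext
      intro h
      rw [LinearMap.flip_apply, hB, hB, ← Module.End.mul_apply, ← map_mul,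
        ← Module.End.mul_apply, ← map_mul, hs]
      simp
    have h2 : B = B.flip := LinearMap.ext_on_range (v := fun g => π g v) hspan h1
    exact LinearMap.congr_fun (LinearMap.congr_fun h2 x) y
  · let W : Subrepresentation π :=
      { toSubmodule := LinearMap.ker B
        apply_mem_toSubmodule := by
          intro g x hx
          rw [LinearMap.mem_ker] at hx ⊢
          ext w
          have := hinv g x (π g⁻¹ w)
          rw [← Module.End.mul_apply (π g) (π g⁻¹), ← map_mul] at this
          simpa [hx] using this }
    intro x hx
    have hx' : x ∈ W.toSubmodule := by
      change B x = 0
      ext w; simp [hx w]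
    rcases hirr W with h | h
    · rw [h] at hx'; simpa using hx'
    · exfalso
      have : v ∈ W.toSubmodule := by rw [h]; trivial
      have h0 : B v = 0 := this
      have h1 := hB v 1
      simp [h0] at h1
      exact hl h1.symm

/-- Orthogonal direct sums. -/
theorem hasOrthForm_of_isCompl {G V : Type*} [Group G] [AddCommGroup V] [Module ℂ V]
    (π : Representation ℂ G V) (W W' : Subrepresentation π) (h : IsCompl W W')
    (h1 : HasOrthForm W.toRepresentation) (h2 : HasOrthForm W'.toRepresentation) :
    HasOrthForm π := by
  have hc : IsCompl W.toSubmodule W'.toSubmodule := by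
    constructor
    · rw [disjoint_iff]
      exact congrArg Subrepresentation.toSubmodule (disjoint_iff.1 h.disjoint)
    · rw [codisjoint_iff]
      exact congrArg Subrepresentation.toSubmodule (codisjoint_iff.1 h.codisjoint)
  obtain ⟨B, hB1, hB2, hB3⟩ := h1
  obtain ⟨C, hC1, hC2, hC3⟩ := h2
  let e := Submodule.prodEquivOfIsCompl _ _ hc
  let p : V →ₗ[ℂ] W.toSubmodule := LinearMap.fst ℂ _ _ ∘ₗ e.symm.toLinearMap
  let p' : V →ₗ[ℂ] W'.toSubmodule := LinearMap.snd ℂ _ _ ∘ₗ e.symm.toLinearMap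
  have he : ∀ g z, e.symm (π g (e z)) =
      (W.toRepresentation g z.1, W'.toRepresentation g z.2) := by
    intro g z
    rw [LinearEquiv.symm_apply_eq]
    simp [e, Subrepresentation.toRepresentation]
  refine ⟨B.compl₁₂ p p + C.compl₁₂ p' p', ?_, ?_, ?_⟩
  · intro x y
    simp [hB1 (p x), hC1 (p' x)]
  · intro g x y
    obtain ⟨x, rfl⟩ := e.surjective x
    obtain ⟨y, rfl⟩ := e.surjective y
    simp [p, p', he, hB2, hC2]
  · intro x hx
    obtain ⟨x, rfl⟩ := e.surjective x
    have a1 : x.1 = 0 := by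
      apply hB3
      intro w
      simpa [p, p'] using hx (e (w, 0))
    have a2 : x.2 = 0 := by
      apply hC3
      intro w
      simpa [p, p'] using hx (e (0, w))
    have : x = 0 := Prod.ext a1 a2
    simp [this]

/-- Reduction to irreducible representations. -/
theorem hasOrthForm_of_irr.{u, w} {G : Type w} [Group G] [Finite G]
    (H : ∀ (V : Type u) [AddCommGroup V] [Module ℂ V] [FiniteDimensional ℂ V] [Nontrivial V]
      (π : Representation ℂ G V),
      (∀ W : Subrepresentation π, W.toSubmodule = ⊥ ∨ W.toSubmodule = ⊤) → HasOrthForm π)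
    (n : ℕ) : ∀ (V : Type u) [AddCommGroup V] [Module ℂ V] [FiniteDimensional ℂ V]
      (π : Representation ℂ G V), Module.finrank ℂ V = n → HasOrthForm π := by
  induction n using Nat.strong_induction_on with
  | _ n ih =>
    intro V _ _ _ π hn
    rcases subsingleton_or_nontrivial V with hV | hV
    · exact ⟨0, by simp, by simp, fun v _ => Subsingleton.elim _ _⟩
    by_cases hirr : ∀ W : Subrepresentation π, W.toSubmodule = ⊥ ∨ W.toSubmodule = ⊤
    · exact H V π hirr
    push Not at hirr
    obtain ⟨W, hb, ht⟩ := hirr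
    have : NeZero (Nat.card G : ℂ) := ⟨by simp [Nat.card_pos.ne']⟩
    have hss : Representation.IsSemisimpleRepresentation π := inferInstance
    obtain ⟨W', hW'⟩ := exists_isCompl W
    refine hasOrthForm_of_isCompl π W W' hW' (ih _ ?_ _ _ rfl) (ih _ ?_ _ _ rfl)
    · rw [← hn]
      exact Submodule.finrank_lt (lt_top_iff_ne_top.2 ht).ne
    · rw [← hn]
      refine Submodule.finrank_lt ?_
      intro h'
      apply hb
      have : W' = ⊤ := Subrepresentation.toSubmodule_injective h'
      have h2 := disjoint_iff.1 hW'.disjoint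
      rw [this, inf_top_eq] at h2
      rw [h2]; rfl

section SL
variable {F : Type*} [Field F]

/-- Upper unipotents. -/
def upperU (x : F) : SpecialLinearGroup (Fin 2) F :=
  ⟨!![1, x; 0, 1], by simp [Matrix.det_fin_two]⟩

/-- Lower unipotents. -/
def lowerU (x : F) : SpecialLinearGroup (Fin 2) F :=
  ⟨!![1, 0; x, 1], by simp [Matrix.det_fin_two]⟩

/-- Weyl element. -/
def weylW : SpecialLinearGroup (Fin 2) F :=
  ⟨!![0, 1; -1, 0], by simp [Matrix.det_fin_two]⟩

theorem upperU_coe (x : F) :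
    (upperU x : Matrix (Fin 2) (Fin 2) F) = !![1, x; 0, 1] := rfl

theorem lowerU_coe (x : F) :
    (lowerU x : Matrix (Fin 2) (Fin 2) F) = !![1, 0; x, 1] := rfl

theorem weylW_coe :
    ((weylW : SpecialLinearGroup (Fin 2) F) : Matrix (Fin 2) (Fin 2) F) = !![0, 1; -1, 0] := rfl

theorem upperU_add (x y : F) : upperU (x + y) = upperU x * upperU y := by
  apply Matrix.SpecialLinearGroup.ext; intro i j
  fin_cases i <;> fin_cases j <;> simp [upperU_coe, Matrix.mul_apply, Fin.sum_univ_two, add_comm]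

theorem upperU_zero : upperU (0 : F) = 1 := by
  apply Matrix.SpecialLinearGroup.ext; intro i j
  fin_cases i <;> fin_cases j <;> simp [upperU_coe]

theorem lowerU_conj (x : F) : lowerU (-x) = weylW * upperU x * weylW⁻¹ := by
  rw [eq_mul_inv_iff_mul_eq]
  apply Matrix.SpecialLinearGroup.ext; intro i j
  fin_cases i <;> fin_cases j <;>
    simp [upperU_coe, lowerU_coe, weylW_coe, Matrix.mul_apply, Fin.sum_univ_two]

theorem inv_eq_of_c_ne [CharP F 2] (g : SpecialLinearGroup (Fin 2) F) (hc : g 1 0 ≠ 0) :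
    ∃ s : F, g⁻¹ = upperU s * g * upperU s := by
  obtain ⟨s, hs⟩ : ∃ s : F, s * g 1 0 = g 0 0 + g 1 1 :=
    ⟨(g 0 0 + g 1 1) / g 1 0, div_mul_cancel₀ _ hc⟩
  refine ⟨s, ?_⟩
  have h2 : (2 : F) = 0 := CharTwo.two_eq_zero
  apply Matrix.SpecialLinearGroup.ext; intro i j
  rw [Matrix.SpecialLinearGroup.coe_inv, Matrix.adjugate_fin_two]
  fin_cases i <;> fin_cases j <;>
    simp [upperU_coe, Matrix.mul_apply, Fin.sum_univ_two, Matrix.vecMul, dotProduct]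
  · linear_combination -hs - g 0 0 * h2
  · linear_combination -s * hs - (s * g 0 0 + s * g 1 1 + g 0 1) * h2
  · linear_combination -g 1 0 * h2
  · linear_combination -hs - g 1 1 * h2

theorem upperU_comm (g : SpecialLinearGroup (Fin 2) F) (hc : g 1 0 = 0) (y : F) :
    g * upperU y = upperU (g 0 0 ^ 2 * y) * g := by
  have hd : g 0 0 * g 1 1 - g 0 1 * g 1 0 = 1 := by
    rw [← Matrix.det_fin_two]; exact g.2
  rw [hc] at hd
  apply Matrix.SpecialLinearGroup.ext; intro i j
  fin_cases i <;> fin_cases j <;>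
    simp [upperU_coe, Matrix.mul_apply, Fin.sum_univ_two, hc]
  linear_combination (-g 0 0 * y) * hd

theorem eq_upperU (g : SpecialLinearGroup (Fin 2) F) (hc : g 1 0 = 0) (ha : g 0 0 = 1) :
    g = upperU (g 0 1) := by
  have hd : g 0 0 * g 1 1 - g 0 1 * g 1 0 = 1 := by
    rw [← Matrix.det_fin_two]; exact g.2
  rw [hc, ha] at hd
  apply Matrix.SpecialLinearGroup.ext; intro i j
  fin_cases i <;> fin_cases j <;> simp [upperU_coe, hc, ha]
  linear_combination hd

variable [Fintype F] [CharP F 2]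

theorem irr_case {V : Type*} [AddCommGroup V] [Module ℂ V] [Nontrivial V]
    (π : Representation ℂ (SpecialLinearGroup (Fin 2) F) V)
    (hirr : ∀ W : Subrepresentation π, W.toSubmodule = ⊥ ∨ W.toSubmodule = ⊤) :
    HasOrthForm π := by
  classical
  have hinvU : ∀ x : F, (upperU x)⁻¹ = upperU x := by
    intro x
    rw [inv_eq_iff_mul_eq_one, ← upperU_add, CharTwo.add_self_eq_zero, upperU_zero]
  have hsq : ∀ (ψ : AddChar F ℂ) (x : F), ψ x * ψ x = 1 := by
    intro ψ x
    rw [← AddChar.map_add_eq_mul, CharTwo.add_self_eq_zero, AddChar.map_zero_eq_one]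
  let E : AddChar F ℂ → (V →ₗ[ℂ] V) := fun ψ => ∑ a, ψ a • π (upperU a)
  have hEr : ∀ ψ b x, E ψ (π (upperU b) x) = ψ b • E ψ x := by
    intro ψ b x
    simp only [E, LinearMap.sum_apply, LinearMap.smul_apply, Finset.smul_sum]
    rw [← Equiv.sum_comp (Equiv.addRight b) (fun a => ψ b • ψ a • π (upperU a) x)]
    refine Finset.sum_congr rfl fun a _ => ?_
    rw [← Module.End.mul_apply, ← map_mul, ← upperU_add, smul_smul]
    congr 1
    simp only [Equiv.coe_addRight, AddChar.map_add_eq_mul]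
    linear_combination (-ψ a) * hsq ψ b
  have hEl : ∀ ψ b x, π (upperU b) (E ψ x) = ψ b • E ψ x := by
    intro ψ b x
    rw [← hEr]
    simp only [E, LinearMap.sum_apply, LinearMap.smul_apply, map_sum, map_smul]
    refine Finset.sum_congr rfl fun a _ => ?_
    rw [← Module.End.mul_apply, ← map_mul, ← upperU_add, ← Module.End.mul_apply, ← map_mul,
      ← upperU_add, add_comm]
  have hsum : ∀ x, ∑ ψ, E ψ x = (Fintype.card F : ℂ) • x := by
    intro x
    simp only [E, LinearMap.sum_apply, LinearMap.smul_apply]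
    rw [Finset.sum_comm]
    simp only [← Finset.sum_smul, AddChar.sum_apply_eq_ite]
    simp [ite_smul, upperU_zero]
  have hcard : (Fintype.card F : ℂ) ≠ 0 := by simp
  have hdual : ∀ v : V, v ≠ 0 → ∃ l : V →ₗ[ℂ] ℂ, l v ≠ 0 := by
    intro v hv
    by_contra! h
    exact hv ((Module.forall_dual_apply_eq_zero_iff ℂ v).1 h)
  by_cases hψ : ∃ ψ : AddChar F ℂ, ψ ≠ 0 ∧ ∃ x, E ψ x ≠ 0
  · obtain ⟨ψ, hψ0, x, hx⟩ := hψ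
    obtain ⟨l0, hl0⟩ := hdual _ hx
    let l := l0 ∘ₗ E ψ
    have hl1 : ∀ b y, l (π (upperU b) y) = ψ b * l y := by
      intro b y; simp [l, hEr]
    have hr1 : ∀ b, π (upperU b) (E ψ x) = ψ b • E ψ x := fun b => hEl ψ b x
    refine hasOrthForm_of_coeff π hirr (E ψ x) l ?_ ?_
    · have : E ψ (E ψ x) = (Fintype.card F : ℂ) • E ψ x := by
        have h0 : ∀ y, E ψ y = ∑ a, ψ a • π (upperU a) y := by
          intro y; simp [E]
        rw [h0 (E ψ x)]
        simp [hr1, smul_smul, hsq, Nat.cast_smul_eq_nsmul]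
      simp only [l, LinearMap.comp_apply, this, map_smul, smul_eq_mul]
      exact mul_ne_zero hcard hl0
    · have hz : ∀ g : SpecialLinearGroup (Fin 2) F, g 1 0 = 0 → g 0 0 ≠ 1 →
          l (π g (E ψ x)) = 0 := by
        intro g hc ha
        by_contra hne
        apply hψ0
        have ha2 : g 0 0 ^ 2 + 1 ≠ 0 := by
          intro h
          apply ha
          have : (g 0 0 + 1) ^ 2 = 0 := by rw [CharTwo.add_sq]; simpa using h
          have := pow_eq_zero_iff (two_ne_zero) |>.1 this
          exact CharTwo.add_eq_zero.1 this
        have key : ∀ y, ψ ((g 0 0 ^ 2 + 1) * y) = 1 := by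
          intro y
          have h1 := congrArg (fun k => l (π k (E ψ x))) (upperU_comm g hc y)
          simp only [map_mul, Module.End.mul_apply, hr1, hl1, map_smul, smul_eq_mul] at h1
          have h2 := mul_right_cancel₀ hne h1
          rw [add_mul, AddChar.map_add_eq_mul, one_mul, ← h2, hsq]
        ext y
        have := key ((g 0 0 ^ 2 + 1)⁻¹ * y)
        rw [mul_inv_cancel_left₀ ha2] at this
        simp [this]
      intro g
      by_cases hc : g 1 0 = 0
      · by_cases ha : g 0 0 = 1
        · rw [eq_upperU g hc ha, hinvU]
        · have hd : g 0 0 * g 1 1 - g 0 1 * g 1 0 = 1 := by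
            rw [← Matrix.det_fin_two]; exact g.2
          rw [hz g hc ha, hz g⁻¹]
          · rw [Matrix.SpecialLinearGroup.coe_inv, Matrix.adjugate_fin_two]; simp [hc]
          · rw [Matrix.SpecialLinearGroup.coe_inv, Matrix.adjugate_fin_two]
            simp only [Matrix.of_apply, Matrix.cons_val', Matrix.cons_val_zero]
            intro h
            apply ha
            simpa [hc, h] using hd
      · obtain ⟨s, hs⟩ := inv_eq_of_c_ne g hc
        rw [hs]
        simp only [map_mul, Module.End.mul_apply, hr1, hl1, map_smul, smul_eq_mul]
        rw [← mul_assoc, hsq, one_mul]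
  · push Not at hψ
    have hU : ∀ b, π (upperU b) = 1 := by
      intro b
      ext x
      have h1 : E 0 x = (Fintype.card F : ℂ) • x := by
        rw [← hsum x, Finset.sum_eq_single 0]
        · intro ψ _ h; exact hψ ψ h x
        · simp
      have h2 := hEl 0 b x
      rw [h1, map_smul] at h2
      have h3 : (Fintype.card F : ℂ) • π (upperU b) x = (Fintype.card F : ℂ) • x := by
        simpa using h2
      simpa using smul_right_injective V hcard h3
    have hL : ∀ b, π (lowerU b) = 1 := by
      intro b
      rw [← neg_neg b, lowerU_conj, map_mul, map_mul, hU, mul_one, ← map_mul, mul_inv_cancel,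
        map_one]
    have hc : ∀ g : SpecialLinearGroup (Fin 2) F, g 1 0 ≠ 0 → π g = π g⁻¹ := by
      intro g hc
      obtain ⟨s, hs⟩ := inv_eq_of_c_ne g hc
      rw [hs]; simp [hU]
    have hall : ∀ g : SpecialLinearGroup (Fin 2) F, π g = π g⁻¹ := by
      intro g
      by_cases h0 : g 1 0 = 0
      · have hd : g 0 0 * g 1 1 - g 0 1 * g 1 0 = 1 := by
          rw [← Matrix.det_fin_two]; exact g.2
        have h1 : (g * lowerU 1 : SpecialLinearGroup (Fin 2) F) 1 0 ≠ 0 := by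
          have : (g * lowerU 1 : SpecialLinearGroup (Fin 2) F) 1 0 = g 1 1 := by
            simp [lowerU_coe, Matrix.mul_apply, Fin.sum_univ_two, h0]
          rw [this]
          intro h
          simp [h, h0] at hd
        have h2 := hc _ h1
        have h3 : π (lowerU (1 : F))⁻¹ = 1 := by
          have : π (lowerU (1 : F))⁻¹ * π (lowerU (1 : F)) = 1 := by
            rw [← map_mul, inv_mul_cancel, map_one]
          rwa [hL, mul_one] at this
        rw [_root_.mul_inv_rev, map_mul, map_mul, hL, h3] at h2
        simpa using h2
      · exact hc g h0
    obtain ⟨v, hv⟩ := exists_ne (0 : V)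
    obtain ⟨l, hl⟩ := hdual v hv
    exact hasOrthForm_of_coeff π hirr v l hl fun g => by rw [← hall g]

end SL

theorem sl2_even_char_all_reps_orthogonal
    {F : Type*} [Field F] [Fintype F]
    (hq : ∃ r : ℕ, 1 ≤ r ∧ Fintype.card F = 2 ^ r)
    {V : Type*} [AddCommGroup V] [Module ℂ V] [FiniteDimensional ℂ V]
    (π : Representation ℂ (SpecialLinearGroup (Fin 2) F) V) :
    ∃ B : V →ₗ[ℂ] V →ₗ[ℂ] ℂ,
      (∀ v w : V, B v w = B w v) ∧
      (∀ (g : SpecialLinearGroup (Fin 2) F) (v w : V), B (π g v) (π g w) = B v w) ∧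
      (∀ v : V, (∀ w : V, B v w = 0) → v = 0) := by
  obtain ⟨r, hr, hcard⟩ := hq
  have hchar : CharP F 2 := by
    have h0 : (2 : F) = 0 := by
      have := FiniteField.cast_card_eq_zero F
      rw [hcard] at this
      push_cast at this
      exact pow_eq_zero_iff (by omega) |>.1 this
    exact CharTwo.of_one_ne_zero_of_two_eq_zero one_ne_zero h0
  have : Finite (SpecialLinearGroup (Fin 2) F) := inferInstance
  exact hasOrthForm_of_irr (fun V _ _ _ _ π h => irr_case π h) _ V π rfl
end
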